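/- The identity map on M/∂^M M together with the maps induced by ψ^k (k ≥ 1) define an embedding of cohomology complexes Γ^•(A,M) ↪ C̄^•(A,M), i.e., the induced injective maps intertwine the differential δ on Γ^• with the differential d on C̄^• (ψ^1 ∘ δ = d on M/∂^M M, and ψ^{k+1} ∘ δ = d ∘ ψ^k on Γ^k). If moreover A decomposes, as an 𝔽[∂]-module, into a direct sum of its torsion and a free submodule, this embedding is an isomorphism of complexes Γ^•(A,M) ≅ C̄^•(A,M). -/

import Mathlib

namespace LCC

/-! ### Index utilities -/

/-- Skip one index: the increasing enumeration of `{0,…,k} \ {i}`. -/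
def skip1 (i r : ℕ) : ℕ := if r < i then r else r + 1

/-- Skip two indices `i < j`: the increasing enumeration of `{0,…,k+1} \ {i,j}`. -/
def skip2 (i j r : ℕ) : ℕ := if r < i then r else if r + 1 < j then r + 1 else r + 2

/-- Remove the `i`-th entry of a tuple. -/
def rm1 {α : Type*} {k : ℕ} (i : ℕ) (a : Fin (k+1) → α) : Fin k → α :=
  fun r => a ⟨skip1 i r.1, by have := r.2; unfold skip1; split <;> omega⟩

/-- Remove the `i`-th and `j`-th entries (for `i < j`) of a tuple. -/
def rm2 {α : Type*} {k : ℕ} (i j : ℕ) (a : Fin (k+2) → α) : Fin k → α :=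
  fun r => a ⟨skip2 i j r.1, by
    have := r.2; unfold skip2; split
    · omega
    · split <;> omega⟩

/-- Total weight of a multi-index. -/
def wt {k : ℕ} (ν : Fin k → ℕ) : ℕ := ∑ r, ν r

/-- The multinomial coefficient `(|m| + s)! / (∏ mᵣ! · s!)`. -/
def mnom {K : ℕ} (m : Fin K → ℕ) (s : ℕ) : ℕ :=
  (wt m + s).factorial / ((∏ r, (m r).factorial) * s.factorial)

variable (F : Type*) [Field F]

/-- A Lie conformal algebra over `F`: an `F[∂]`-module `A` (given by the linear
endomorphism `D`), together with a `λ`-bracket recorded through its coefficients: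
`[a_λ b] = ∑ₙ (br a b n) λⁿ`, satisfying sesquilinearity, skew-symmetry and the
Jacobi identity (all written in terms of coefficients of the `λ`-expansions). -/
structure LCA (A : Type*) [AddCommGroup A] [Module F A] where
  D : A →ₗ[F] A
  br : A →ₗ[F] A →ₗ[F] (ℕ → A)
  br_fin : ∀ a b, (Function.support (br a b)).Finite
  sesq_left_zero : ∀ a b, br (D a) b 0 = 0
  sesq_left : ∀ a b n, br (D a) b (n+1) = - br a b n
  sesq_right : ∀ a b n, br a (D b) n
      = D (br a b n) + (if n = 0 then 0 else br a b (n-1))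
  skew : ∀ a b m, br a b m
      = - ∑ᶠ n, ((-1 : F)^n * (n.choose m : F)) • ((D ^ (n - m)) (br b a n))
  jacobi : ∀ a b c m n,
      br a (br b c n) m - br b (br a c m) n
        = ∑ j ∈ Finset.range (m+1), (((n+j).choose j : F)) • br (br a b (m-j)) c (n+j)

/-- A module over a Lie conformal algebra: an `F[∂]`-module `M` with a `λ`-action
of `A`, given through the coefficients `a_λ v = ∑ₙ (act a v n) λⁿ`, satisfying
sesquilinearity and the Jacobi identity. -/
structure LCAMod {A : Type*} [AddCommGroup A] [Module F A] (L : LCA F A)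
    (M : Type*) [AddCommGroup M] [Module F M] where
  D : M →ₗ[F] M
  act : A →ₗ[F] M →ₗ[F] (ℕ → M)
  act_fin : ∀ a m, (Function.support (act a m)).Finite
  sesq_left_zero : ∀ a m, act (L.D a) m 0 = 0
  sesq_left : ∀ a m n, act (L.D a) m (n+1) = - act a m n
  sesq_right : ∀ a m n, act a (D m) n
      = D (act a m n) + (if n = 0 then 0 else act a m (n-1))
  jacobi : ∀ a b v p q,
      act a (act b v q) p - act b (act a v p) q
        = ∑ j ∈ Finset.range (p+1), (((q+j).choose j : F)) • act (L.br a b (p-j)) v (q+j)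

variable {F}
variable {A M : Type*} [AddCommGroup A] [Module F A] [AddCommGroup M] [Module F M]

/-- Torsion elements of the `F[∂]`-module `A`. -/
def IsTor (L : LCA F A) (x : A) : Prop :=
  ∃ p : Polynomial F, p ≠ 0 ∧ Polynomial.aeval L.D p x = 0

/-- `A` decomposes, as an `F[∂]`-module, into the direct sum of its torsion and
a free complementary submodule `F[∂] ⊗ U`. -/
def Decomposes (L : LCA F A) : Prop :=
  ∃ U : Submodule F A, Function.Bijective
    (fun p : {x : A // IsTor L x} × (ℕ →₀ U) =>
      (p.1 : A) + p.2.sum (fun n u => (L.D ^ n) (u : A)))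

variable {L : LCA F A}

/-- The condition for a coefficient family
`γ : A^{⊗ k} → F[λ₁,…,λ_k] ⊗ M` (recorded via the coefficients
`γ a ν` of `λ^ν`) to be a basic `k`-cochain: `F`-multilinearity, polynomiality,
sesquilinearity (A1) and skew-symmetry (A2). -/
structure IsGamma (R : LCAMod F L M) (k : ℕ)
    (γ : (Fin k → A) → (Fin k → ℕ) → M) : Prop where
  map_add : ∀ (a : Fin k → A) (i : Fin k) (x y : A),
    γ (Function.update a i (x + y)) = γ (Function.update a i x) + γ (Function.update a i y)
  map_smul : ∀ (a : Fin k → A) (i : Fin k) (r : F) (x : A),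
    γ (Function.update a i (r • x)) = r • γ (Function.update a i x)
  fin : ∀ a, (Function.support (γ a)).Finite
  sesq : ∀ (a : Fin k → A) (i : Fin k) (x : A) (ν : Fin k → ℕ),
    γ (Function.update a i (L.D x)) ν
      = (if ν i = 0 then 0 else - γ (Function.update a i x) (Function.update ν i (ν i - 1)))
  skew : ∀ (a : Fin k → A) (ν : Fin k → ℕ) (σ : Equiv.Perm (Fin k)),
    γ (a ∘ σ) (ν ∘ σ) = ((Equiv.Perm.sign σ : ℤˣ) : ℤ) • γ a ν

/-- The action of `∂` on basic cochains: `(∂γ) = (∂^M + λ₁ + ⋯ + λ_k) ∘ γ`,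
in terms of coefficients. -/
def GammaD (R : LCAMod F L M) {k : ℕ} (γ : (Fin k → A) → (Fin k → ℕ) → M) :
    (Fin k → A) → (Fin k → ℕ) → M :=
  fun a ν => R.D (γ a ν)
    + ∑ i : Fin k, (if ν i = 0 then 0 else γ a (Function.update ν i (ν i - 1)))

/-- Substitution of the auxiliary variable `μ` by
`λ† = −λ₁ − ⋯ − λ_K − ∂^M` (with `∂^M` moved to the left) in a polynomial
`q` in `λ₁,…,λ_K, μ`, recorded through its coefficients `q ρ n` of `λ^ρ μ^n`.
The result is the coefficient of `λ^ν`. -/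
noncomputable def substDag {K : ℕ} (DM : M →ₗ[F] M)
    (q : (Fin K → ℕ) → ℕ → M) (ν : Fin K → ℕ) : M :=
  ∑ ρ ∈ Finset.Iic ν, ∑ᶠ s : ℕ,
    (((-1 : F)^(wt (fun r => ν r - ρ r) + s)) * (mnom (fun r => ν r - ρ r) s : F)) •
      ((DM ^ s) (q ρ (wt (fun r => ν r - ρ r) + s)))

/-- The condition for a coefficient family
`c : A^{⊗(k+1)} → F[λ₁,…,λ_k] ⊗ M` to be a `(k+1)`-`λ`-bracket
(an element of `C^{k+1}(A,M)`), i.e. conditions B1, B2, B3 of the paper,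
written in terms of the coefficients `c a ν` of `λ^ν`. -/
structure IsCBr (R : LCAMod F L M) (k : ℕ)
    (c : (Fin (k+1) → A) → (Fin k → ℕ) → M) : Prop where
  map_add : ∀ (a : Fin (k+1) → A) (i : Fin (k+1)) (x y : A),
    c (Function.update a i (x + y)) = c (Function.update a i x) + c (Function.update a i y)
  map_smul : ∀ (a : Fin (k+1) → A) (i : Fin (k+1)) (r : F) (x : A),
    c (Function.update a i (r • x)) = r • c (Function.update a i x)
  fin : ∀ a, (Function.support (c a)).Finite
  sesq₁ : ∀ (a : Fin (k+1) → A) (i : Fin k) (x : A) (ν : Fin k → ℕ),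
    c (Function.update a i.castSucc (L.D x)) ν
      = (if ν i = 0 then 0
         else - c (Function.update a i.castSucc x) (Function.update ν i (ν i - 1)))
  sesq₂ : ∀ (a : Fin (k+1) → A) (x : A) (ν : Fin k → ℕ),
    c (Function.update a (Fin.last k) (L.D x)) ν
      = R.D (c (Function.update a (Fin.last k) x) ν)
        + ∑ i : Fin k, (if ν i = 0 then 0
            else c (Function.update a (Fin.last k) x) (Function.update ν i (ν i - 1)))
  skew : ∀ (a : Fin (k+1) → A) (ν : Fin k → ℕ) (σ : Equiv.Perm (Fin (k+1))),
    c a ν = ((Equiv.Perm.sign σ : ℤˣ) : ℤ) • substDag R.D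
      (fun ρ n =>
        if (Fin.snoc ρ n : Fin (k+1) → ℕ) (σ (Fin.last k)) = 0 then
          c (a ∘ σ) (fun i : Fin k => (Fin.snoc ρ n : Fin (k+1) → ℕ) (σ i.castSucc))
        else 0) ν

/-- The subspace `C̄`: poly-`λ`-brackets vanishing whenever one of the arguments is
a torsion element of `A`. -/
def VanishOnTorsion (L : LCA F A) {k : ℕ}
    (c : (Fin (k+1) → A) → (Fin k → ℕ) → M) : Prop :=
  ∀ a ν, (∃ i, IsTor L (a i)) → c a ν = 0

/-- The differential `d : C⁰ = M/∂M → C¹`, `(d∫m)(a) = a_{−∂^M} m`. -/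
noncomputable def dZero (R : LCAMod F L M) (m : M) :
    (Fin 1 → A) → (Fin 0 → ℕ) → M :=
  fun a _ => ∑ᶠ n, ((-1 : F)^n) • ((R.D ^ n) (R.act (a 0) m n))

/-- The second term of the differential `d` of the complex of
poly-`λ`-brackets (the double sum over `i < j` in the paper's formula). -/
noncomputable def dPair (L : LCA F A) (R : LCAMod F L M) :
    ∀ {k : ℕ}, ((Fin (k+1) → A) → (Fin k → ℕ) → M) →
      (Fin (k+2) → A) → (Fin (k+1) → ℕ) → M
  | 0, _, _, _ => 0
  | (s+1), c, a, ν =>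
    ∑ i : Fin (s+2), ∑ j : Fin (s+2),
      if i < j then
        ((-1 : F)^(s + i.1 + j.1 + 1)) •
          ∑ p ∈ Finset.range (ν i + 1),
            substDag R.D
              (fun ρ n =>
                if ρ i = 0 ∧ ρ j = 0 then
                  c (Fin.snoc (Fin.snoc (rm2 i.1 j.1 (Fin.init a)) (a (Fin.last (s+2))))
                      (L.br (a i.castSucc) (a j.castSucc) p))
                    (Fin.snoc (rm2 i.1 j.1 ρ) n)
                else 0)
              (Function.update ν i (ν i - p))
      else 0

/-- The differential `d` on the complex `C^•(A,M)` of poly-`λ`-brackets,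
written in terms of coefficients (formula (1.8) of the paper). Here `c` is a
`(k+1)`-`λ`-bracket and `dRaw c` is a `(k+2)`-`λ`-bracket. -/
noncomputable def dRaw (L : LCA F A) (R : LCAMod F L M) {k : ℕ}
    (c : (Fin (k+1) → A) → (Fin k → ℕ) → M) :
    (Fin (k+2) → A) → (Fin (k+1) → ℕ) → M :=
  fun a ν =>
    (∑ i : Fin (k+1), ((-1 : F)^i.1) •
        R.act (a i.castSucc) (c (rm1 i.1 a) (rm1 i.1 ν)) (ν i))
    + dPair L R c a ν
    + ((-1 : F)^(k+1)) • substDag R.D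
        (fun ρ n =>
          if ρ (Fin.last k) = 0 then
            R.act (a (Fin.last (k+1))) (c (Fin.init a) (Fin.init ρ)) n
          else 0) ν
    + ∑ i : Fin (k+1), ((-1 : F)^(i.1+1)) •
        c (Fin.snoc (rm1 i.1 (Fin.init a)) (L.br (a i.castSucc) (a (Fin.last (k+1))) (ν i)))
          (rm1 i.1 ν)

/-- The second term of the differential `δ` of the basic complex
`Γ̃^•(A,M)` (the double sum over `i < j`). -/
noncomputable def deltaPair (L : LCA F A) (R : LCAMod F L M) :
    ∀ {k : ℕ}, ((Fin k → A) → (Fin k → ℕ) → M) →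
      (Fin (k+1) → A) → (Fin (k+1) → ℕ) → M
  | 0, _, _, _ => 0
  | (s+1), γ, a, ν =>
    ∑ i : Fin (s+2), ∑ j : Fin (s+2),
      if i < j then
        ((-1 : F)^(s + i.1 + j.1)) •
          ∑ p ∈ Finset.range (ν i + 1),
            ((((ν i - p) + ν j).choose (ν i - p) : F)) •
              γ (Fin.snoc (rm2 i.1 j.1 a) (L.br (a i) (a j) p))
                (Fin.snoc (rm2 i.1 j.1 ν) ((ν i - p) + ν j))
      else 0

/-- The differential `δ` of the basic Lie conformal algebra cohomology complex
`Γ̃^•(A,M)`, written in terms of coefficients of the `λ`-expansions. -/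
noncomputable def deltaRaw (L : LCA F A) (R : LCAMod F L M) {k : ℕ}
    (γ : (Fin k → A) → (Fin k → ℕ) → M) :
    (Fin (k+1) → A) → (Fin (k+1) → ℕ) → M :=
  fun a ν =>
    (∑ i : Fin (k+1), ((-1 : F)^i.1) •
        R.act (a i) (γ (rm1 i.1 a) (rm1 i.1 ν)) (ν i))
    + deltaPair L R γ a ν

/-- The map `ψ^{k+1} : Γ̃^{k+1}(A,M) → C^{k+1}(A,M)`,
`{a₁ λ₁ ⋯ a_k λ_k a_{k+1}}_{ψ(γ)} = γ_{λ₁,…,λ_k,λ†}(a₁,…,a_{k+1})`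
where `λ† = −λ₁ − ⋯ − λ_k − ∂^M` (with `∂^M` moved to the left). -/
noncomputable def psiRaw (R : LCAMod F L M) {k : ℕ}
    (γ : (Fin (k+1) → A) → (Fin (k+1) → ℕ) → M) :
    (Fin (k+1) → A) → (Fin k → ℕ) → M :=
  fun a ν => substDag R.D (fun ρ n => γ a (Fin.snoc ρ n)) ν

/-- The map `χ` on "polynomial duals": given
`φ : Hom(F[λ₁,…,λ_K], M)` (recorded through its values `φ ν` on monomials),
`chiMap DM φ` is `φ ∘ (substitution λ_{K+1} ↦ −λ₁ − ⋯ − λ_K + ∂^M)`,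
with `∂^M` moved to the left. -/
noncomputable def chiMap {K : ℕ} (DM : M →ₗ[F] M) (φ : (Fin K → ℕ) → M) :
    (Fin (K+1) → ℕ) → M :=
  fun ν =>
    ∑ m ∈ Finset.Iic (fun _ : Fin K => ν (Fin.last K)),
      if wt m ≤ ν (Fin.last K) then
        (((-1 : F)^(wt m)) * (mnom m (ν (Fin.last K) - wt m) : F)) •
          ((DM ^ (ν (Fin.last K) - wt m)) (φ (fun r => Fin.init ν r + m r)))
      else 0

section Product

variable (F) {N : Type*} [CommRing N] [Algebra F N]

/-- The exterior multiplication of basic cochains, in coefficient form. -/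
noncomputable def wedge {h k : ℕ}
    (α : (Fin h → A) → (Fin h → ℕ) → N) (β : (Fin k → A) → (Fin k → ℕ) → N) :
    (Fin (h+k) → A) → (Fin (h+k) → ℕ) → N :=
  fun a ν =>
    ((h.factorial * k.factorial : F))⁻¹ •
      ∑ σ : Equiv.Perm (Fin (h+k)),
        ((Equiv.Perm.sign σ : ℤˣ) : ℤ) •
          (α (fun i => a (σ (Fin.castAdd k i))) (fun i => ν (σ (Fin.castAdd k i))) *
           β (fun i => a (σ (Fin.natAdd h i))) (fun i => ν (σ (Fin.natAdd h i))))

/-- Contraction of a basic cochain by (a generator of) a basic `h`-chain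
`b ⊗ φ ∈ A^{⊗h} ⊗ Hom(F[λ₁,…,λ_h], N)`. -/
noncomputable def iotaG {h k : ℕ} (b : Fin h → A) (φ : (Fin h → ℕ) → N)
    (γ : (Fin (h + k) → A) → (Fin (h + k) → ℕ) → N) :
    (Fin k → A) → (Fin k → ℕ) → N :=
  fun a ν => ∑ᶠ ρ : Fin h → ℕ, φ ρ * γ (Fin.append b a) (Fin.append ρ ν)

/-- The action of `∂` on (generators of) the space of basic `h`-chains:
`∂(a ⊗ φ) = a ⊗ ((−λ₁^* − ⋯ − λ_h^* + ∂)φ)`. -/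
def chainD (R : LCAMod F L N) {h : ℕ} (φ : (Fin h → ℕ) → N) : (Fin h → ℕ) → N :=
  fun ρ => R.D (φ ρ) - ∑ i : Fin h, φ (Function.update ρ i (ρ i + 1))

/-- Contraction by a basic 1-chain `a₀ ⊗ m(x)`, where `m(x) = ∑ m_k x^k` is recorded
by its coefficient function `m : ℕ → N` (formula (3.23) of the paper, using the
pairing `⟨x^p, λ^q⟩ = q! δ_{p,q}`). -/
noncomputable def iota1 {k : ℕ} (a₀ : A) (m : ℕ → N)
    (γ : (Fin (k+1) → A) → (Fin (k+1) → ℕ) → N) : (Fin k → A) → (Fin k → ℕ) → N :=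
  fun a ν => ∑ᶠ q : ℕ, (q.factorial : F) • (m q * γ (Fin.cons a₀ a) (Fin.cons q ν))

/-- The Lie derivative `L_ξ = δ ∘ ι_ξ + ι_ξ ∘ δ` along a basic 1-chain. -/
noncomputable def lie1 (R : LCAMod F L N) {k : ℕ} (a₀ : A) (m : ℕ → N)
    (γ : (Fin (k+1) → A) → (Fin (k+1) → ℕ) → N) : (Fin (k+1) → A) → (Fin (k+1) → ℕ) → N :=
  deltaRaw L R (iota1 F a₀ m γ) + iota1 F a₀ m (deltaRaw L R γ)

end Product

end LCC

/-!
A `k`-cochain takes values in polynomials in `λ_1, …, λ_k` over `M`, on which `∂` acts as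
`∂^M + λ_1 + ⋯ + λ_k`, and `ψ` is the substitution of `λ_k† = -λ_1 - ⋯ - λ_{k-1} - ∂^M` for `λ_k`.
Every polynomial is congruent modulo `∂` to the result of this substitution, which moreover
kills the image of `∂`. So the substitution identifies the cokernel of `∂` with the polynomials in
`λ_1, …, λ_{k-1}`, and a map between polynomials which commutes with `∂` is determined modulo `∂`
by its effect on polynomials not involving `λ_k`. Applying this to each term of `δ` gives the
terms of `d`. Since `∂` is injective for `k ≥ 1`, a cochain with values in the image of `∂` is
`∂` of a cochain; hence the embedding.

For surjectivity, write the last argument of a `λ`-bracket as `∑ ∂^n u_n` modulo torsion, with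
`u_n` in a space of generators of the free part, and replace `∂` by `-λ_k`. The result
satisfies (A1) and is sent by the substitution to the given bracket, and by (B3) its
skew-symmetrization is too.
-/

namespace LCC

section Index

variable {α : Type*} {k : ℕ}

lemma rm1_eq_removeNth (i : Fin (k + 1)) (a : Fin (k + 1) → α) : rm1 i a = i.removeNth a := by
  ext r
  refine congrArg a (Fin.ext ?_)
  simp only [skip1, Fin.succAbove, Fin.lt_def, Fin.val_castSucc]
  split_ifs <;> rfl

lemma rm2_eq_removeNth {i : Fin (k + 1)} {j : Fin (k + 2)} (hij : i.castSucc < j)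
    (a : Fin (k + 2) → α) : rm2 i j a = i.removeNth (j.removeNth a) := by
  ext r
  refine congrArg a (Fin.ext ?_)
  simp only [Fin.lt_def, Fin.val_castSucc] at hij
  simp only [skip2, Fin.succAbove, Fin.lt_def, Fin.val_castSucc]
  split_ifs <;> simp at * <;> omega

lemma removeNth_castSucc_snoc (i : Fin (k + 1)) (a : Fin (k + 1) → α) (x : α) :
    i.castSucc.removeNth (Fin.snoc a x : Fin (k + 2) → α) = Fin.snoc (i.removeNth a) x := by
  ext r
  refine Fin.lastCases ?_ (fun r => ?_) r <;> simp [Fin.removeNth_apply]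

lemma removeNth_castSucc_eq_snoc (i : Fin (k + 1)) (a : Fin (k + 2) → α) :
    i.castSucc.removeNth a = Fin.snoc (i.removeNth (Fin.init a)) (a (Fin.last (k + 1))) := by
  rw [← removeNth_castSucc_snoc, Fin.snoc_init_self]

end Index

section Polynomials

variable {F : Type*} [CommRing F] {M N : Type*} [AddCommGroup M] [Module F M]
  [AddCommGroup N] [Module F N] {ι κ : Type*} {K : ℕ}

/-- Polynomials in commuting variables `λ_i`, `i : ι`, with coefficients in `M`: the `F`-module
`F[λ_i] ⊗ M`, a polynomial being recorded as the finitely supported family of its coefficients. -/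
abbrev Poly (ι M : Type*) [Zero M] := (ι → ℕ) →₀ M

variable (F) in
/-- Multiplication of polynomials by the monomials `λ^μ`. -/
noncomputable def mulMonomial : Multiplicative (ι → ℕ) →* Module.End F (Poly ι M) where
  toFun μ := Finsupp.lmapDomain M F (μ.toAdd + ·)
  map_one' := by ext; simp
  map_mul' μ μ' := by ext; simp [add_assoc]

@[simp]
lemma mulMonomial_single (μ : Multiplicative (ι → ℕ)) (ν : ι → ℕ) (m : M) :
    mulMonomial F μ (Finsupp.single ν m) = Finsupp.single (μ.toAdd + ν) m := by
  simp [mulMonomial]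

section MulVar

variable [DecidableEq ι]

variable (F) in
/-- Multiplication of polynomials by the variable `λ_i`. -/
noncomputable def mulVar (i : ι) : Module.End F (Poly ι M) :=
  mulMonomial F (Multiplicative.ofAdd (Pi.single i 1))

lemma mulVar_pow (i : ι) (p : ℕ) :
    (mulVar F i : Module.End F (Poly ι M)) ^ p =
      mulMonomial F (Multiplicative.ofAdd (Pi.single i p)) := by
  rw [mulVar, ← map_pow, ← ofAdd_nsmul, ← Pi.single_smul]
  simp

@[simp]
lemma mulVar_pow_single (i : ι) (p : ℕ) (ν : ι → ℕ) (m : M) :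
    (mulVar F i ^ p) (Finsupp.single ν m) = Finsupp.single (Pi.single i p + ν) m := by
  simp [mulVar_pow]

@[simp]
lemma mulVar_single (i : ι) (ν : ι → ℕ) (m : M) :
    mulVar F i (Finsupp.single ν m) = Finsupp.single (Pi.single i 1 + ν) m := by
  simp [mulVar]

lemma mulVar_commute (i j : ι) : Commute (mulVar F i : Module.End F (Poly ι M)) (mulVar F j) :=
  (Commute.all _ _).map (mulMonomial F)

lemma mulVar_mulVar (i j : ι) (v : Poly ι M) :
    mulVar F i (mulVar F j v) = mulVar F j (mulVar F i v) :=
  LinearMap.congr_fun (mulVar_commute i j) v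

lemma mulVar_pow_apply (i : ι) (p : ℕ) (v : Poly ι M) (ν : ι → ℕ) :
    (mulVar F i ^ p) v ν = if p ≤ ν i then v (Function.update ν i (ν i - p)) else 0 := by
  rw [mulVar_pow, mulMonomial, MonoidHom.coe_mk, OneHom.coe_mk, Finsupp.lmapDomain_apply]
  split_ifs with h
  · have hν : ν = Pi.single i p + Function.update ν i (ν i - p) := by
      ext r
      obtain rfl | hr := eq_or_ne r i
      · simp [h]
      · simp [hr]
    conv_lhs => rw [hν]
    exact Finsupp.mapDomain_apply (add_right_injective _) _ _
  · refine Finsupp.mapDomain_of_notMem_range _ _ ?_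
    rintro ⟨μ, rfl⟩
    simp at h

lemma mulVar_apply (i : ι) (v : Poly ι M) (ν : ι → ℕ) :
    mulVar F i v ν = if ν i = 0 then 0 else v (Function.update ν i (ν i - 1)) := by
  rw [← pow_one (mulVar F i), mulVar_pow_apply]
  split_ifs <;> first | rfl | omega

variable (F) in
/-- The sum `∑_p λ_i^p w_p` of a finite family of polynomials `w_p`. -/
noncomputable def expandVar (i : ι) : (ℕ →₀ Poly ι M) →ₗ[F] Poly ι M :=
  Finsupp.lsum F fun p => mulVar F i ^ p

@[simp]
lemma expandVar_single (i : ι) (p : ℕ) (w : Poly ι M) :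
    expandVar F i (Finsupp.single p w) = (mulVar F i ^ p) w := by
  simp [expandVar]

lemma expandVar_apply (i : ι) (w : ℕ →₀ Poly ι M) (ν : ι → ℕ) :
    expandVar F i w ν =
      ∑ p ∈ Finset.range (ν i + 1), w p (Function.update ν i (ν i - p)) := by
  induction w using Finsupp.induction_linear with
  | zero => simp
  | add w w' hw hw' => simp [hw, hw', Finset.sum_add_distrib]
  | single p w =>
    rw [expandVar_single, mulVar_pow_apply]
    split_ifs with h
    · rw [Finset.sum_eq_single_of_mem p (by simpa [Nat.lt_succ_iff] using h)]
      · simp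
      · intro q _ hq
        simp [Finsupp.single_eq_of_ne hq]
    · refine (Finset.sum_eq_zero fun q hq => ?_).symm
      rw [Finset.mem_range] at hq
      rw [Finsupp.single_eq_of_ne (by omega), Finsupp.zero_apply]

end MulVar

/-- The application of a linear map to the coefficients of a polynomial. -/
noncomputable def mapCoeff (D : M →ₗ[F] N) : Poly ι M →ₗ[F] Poly ι N :=
  Finsupp.mapRange.linearMap D

@[simp]
lemma mapCoeff_apply (D : M →ₗ[F] N) (v : Poly ι M) (ν : ι → ℕ) : mapCoeff D v ν = D (v ν) := by
  simp [mapCoeff]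

@[simp]
lemma mapCoeff_single (D : M →ₗ[F] N) (ν : ι → ℕ) (m : M) :
    mapCoeff D (Finsupp.single ν m) = Finsupp.single ν (D m) := by
  simp [mapCoeff]

lemma mapCoeff_pow_single (D : Module.End F M) (s : ℕ) (ν : ι → ℕ) (m : M) :
    (mapCoeff D ^ s : Module.End F (Poly ι M)) (Finsupp.single ν m) =
      Finsupp.single ν ((D ^ s) m) := by
  induction s with
  | zero => simp
  | succ s ih => simp [pow_succ', ih]

lemma mapCoeff_mulMonomial (D : M →ₗ[F] N) (μ : Multiplicative (ι → ℕ)) (v : Poly ι M) :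
    mapCoeff D (mulMonomial F μ v) = mulMonomial F μ (mapCoeff D v) := by
  induction v using Finsupp.induction_linear with
  | zero => simp
  | add v w hv hw => simp [hv, hw]
  | single ν m => simp

variable (F) in
/-- The renaming of the variables of a polynomial along `f`. For `f` the embedding
`Fin.succAbove i` this regards a polynomial as one in which the variable `λ_i` does not occur. -/
noncomputable def rename (f : ι → κ) : Poly ι M →ₗ[F] Poly κ M :=
  Finsupp.lmapDomain M F fun ν => Function.extend f ν 0

@[simp]
lemma rename_single (f : ι → κ) (ν : ι → ℕ) (m : M) :
    rename F f (Finsupp.single ν m) = Finsupp.single (Function.extend f ν 0) m := by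
  simp [rename]

lemma rename_apply_comp {f : ι → κ} (hf : f.Injective) (v : Poly ι M) {ν : κ → ℕ}
    (hν : ∀ r, r ∉ Set.range f → ν r = 0) : rename F f v ν = v (ν ∘ f) := by
  have h : ν = Function.extend f (ν ∘ f) 0 := by
    ext r
    by_cases hr : r ∈ Set.range f
    · obtain ⟨r, rfl⟩ := hr
      simp [hf.extend_apply]
    · rw [Function.extend_apply' _ _ _ hr, hν r hr, Pi.zero_apply]
  conv_lhs => rw [h]
  exact Finsupp.mapDomain_apply (Function.extend_injective hf _) _ _

lemma rename_apply_eq_zero (f : ι → κ) (v : Poly ι M) {ν : κ → ℕ} {r : κ}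
    (hr : r ∉ Set.range f) (hν : ν r ≠ 0) : rename F f v ν = 0 := by
  refine Finsupp.mapDomain_of_notMem_range _ _ ?_
  rintro ⟨μ, rfl⟩
  exact hν (Function.extend_apply' _ _ _ hr)

lemma rename_succAbove_apply (i : Fin (K + 1)) (v : Poly (Fin K) M) (ν : Fin (K + 1) → ℕ) :
    rename F i.succAbove v ν = if ν i = 0 then v (i.removeNth ν) else 0 := by
  split_ifs with h
  · refine rename_apply_comp Fin.succAbove_right_injective v fun r hr => ?_
    rw [Fin.range_succAbove, Set.notMem_compl_iff] at hr
    rwa [hr]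
  · exact rename_apply_eq_zero _ v (by simp [Fin.range_succAbove]) h

lemma rename_castSucc_apply (v : Poly (Fin K) M) (ν : Fin (K + 1) → ℕ) :
    rename F Fin.castSucc v ν = if ν (Fin.last K) = 0 then v (Fin.init ν) else 0 := by
  rw [← Fin.succAbove_last, rename_succAbove_apply, Fin.removeNth_last]

lemma rename_perm_apply (σ : Equiv.Perm ι) (v : Poly ι M) (ν : ι → ℕ) :
    rename F σ v ν = v (ν ∘ σ) :=
  rename_apply_comp σ.injective v fun r hr => absurd (σ.surjective r) hr

lemma rename_rename {ι' : Type*} {f : ι → κ} {g : κ → ι'} (hf : f.Injective) (hg : g.Injective)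
    (v : Poly ι M) : rename F g (rename F f v) = rename F (g ∘ f) v := by
  induction v using Finsupp.induction_linear with
  | zero => simp
  | add v w hv hw => simp [hv, hw]
  | single ν m =>
    suffices Function.extend g (Function.extend f ν 0) 0 = Function.extend (g ∘ f) ν 0 by
      simp [this]
    ext r
    by_cases hr : ∃ t, g t = r
    · obtain ⟨t, rfl⟩ := hr
      rw [hg.extend_apply]
      by_cases ht : ∃ s, f s = t
      · obtain ⟨s, rfl⟩ := ht
        rw [hf.extend_apply, ← Function.comp_apply (f := g), (hg.comp hf).extend_apply]
      · rw [Function.extend_apply' _ _ _ ht, Function.extend_apply']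
        · rfl
        · rintro ⟨s, hs⟩
          exact ht ⟨s, hg hs⟩
    · rw [Function.extend_apply' _ _ _ hr, Function.extend_apply']
      rintro ⟨s, hs⟩
      exact hr ⟨f s, hs⟩

lemma rename_mapCoeff (f : ι → κ) (D : M →ₗ[F] N) (v : Poly ι M) :
    rename F f (mapCoeff D v) = mapCoeff D (rename F f v) := by
  induction v using Finsupp.induction_linear with
  | zero => simp
  | add v w hv hw => simp [hv, hw]
  | single ν m => simp

lemma rename_mulVar [DecidableEq ι] [DecidableEq κ] {f : ι → κ} (hf : f.Injective) (i : ι)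
    (v : Poly ι M) : rename F f (mulVar F i v) = mulVar F (f i) (rename F f v) := by
  induction v using Finsupp.induction_linear with
  | zero => simp
  | add v w hv hw => simp [hv, hw]
  | single ν m =>
    suffices Function.extend f (Pi.single i 1 + ν) (0 : κ → ℕ) =
        Pi.single (f i) 1 + Function.extend f ν 0 by simp [this]
    ext r
    by_cases hr : ∃ t, f t = r
    · obtain ⟨t, rfl⟩ := hr
      simp [hf.extend_apply, Pi.single_apply, hf.eq_iff]
    · have hri : r ≠ f i := fun h => hr ⟨i, h.symm⟩
      simp [Function.extend_apply' _ _ _ hr, hri]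

section TotalD

variable [DecidableEq ι] (D : Module.End F M)

lemma mapCoeff_mulVar (i : ι) (v : Poly ι M) :
    mapCoeff D (mulVar F i v) = mulVar F i (mapCoeff D v) :=
  mapCoeff_mulMonomial D _ v

variable [Fintype ι]

/-- The endomorphism `∂^M + ∑ λ_i` of the polynomials in the `λ_i`. It is the action of `∂` on
basic cochains, and the dependent variable `λ†` stands for multiplication by `-totalD D`. -/
noncomputable def totalD : Module.End F (Poly ι M) :=
  mapCoeff D + ∑ i, mulVar F i

lemma totalD_apply (v : Poly ι M) : totalD D v = mapCoeff D v + ∑ i, mulVar F i v := by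
  simp [totalD]

lemma totalD_coeff (v : Poly ι M) (ν : ι → ℕ) :
    totalD D v ν = D (v ν) +
      ∑ i, if ν i = 0 then 0 else v (Function.update ν i (ν i - 1)) := by
  simp [totalD_apply, mulVar_apply]

lemma totalD_mulVar (i : ι) (v : Poly ι M) :
    totalD D (mulVar F i v) = mulVar F i (totalD D v) := by
  simp [totalD_apply, mapCoeff_mulVar, mulVar_mulVar i]

lemma totalD_mapCoeff (v : Poly ι M) : totalD D (mapCoeff D v) = mapCoeff D (totalD D v) := by
  simp [totalD_apply, mapCoeff_mulVar]

lemma totalD_injective [Nonempty ι] :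
    Function.Injective (totalD D : Module.End F (Poly ι M)) := by
  rw [injective_iff_map_eq_zero]
  intro v hv
  by_contra hne
  let i := Classical.arbitrary ι
  obtain ⟨ν, hν, hmax⟩ := v.support.exists_max_image (· i) (Finsupp.support_nonempty_iff.2 hne)
  have eq_zero_of_lt {μ : ι → ℕ} (hμ : ν i < μ i) : v μ = 0 :=
    Finsupp.notMem_support_iff.1 fun h => (hmax μ h).not_gt hμ
  refine Finsupp.mem_support_iff.1 hν ?_
  have hcoeff := DFunLike.congr_fun hv (Function.update ν i (ν i + 1))
  rw [totalD_coeff, eq_zero_of_lt (by simp), Finset.sum_eq_single_of_mem i (Finset.mem_univ i)]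
    at hcoeff
  · simpa using hcoeff
  · intro j _ hj
    split_ifs
    · rfl
    · exact eq_zero_of_lt (by simp [hj.symm])

lemma totalD_rename_perm (σ : Equiv.Perm ι) (v : Poly ι M) :
    totalD D (rename F σ v) = rename F σ (totalD D v) := by
  simp only [totalD_apply, map_add, map_sum, rename_mapCoeff, rename_mulVar σ.injective]
  rw [Equiv.sum_comp σ fun i => mulVar F i (rename F σ v)]

lemma totalD_rename_succAbove (i : Fin (K + 1)) (v : Poly (Fin K) M) :
    totalD D (rename F i.succAbove v) =
      rename F i.succAbove (totalD D v) + mulVar F i (rename F i.succAbove v) := by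
  simp only [totalD_apply, map_add, map_sum, rename_mapCoeff,
    rename_mulVar (Fin.succAbove_right_injective (p := i)), Fin.sum_univ_succAbove _ i]
  abel

lemma totalD_rename_castSucc (v : Poly (Fin K) M) :
    totalD D (rename F Fin.castSucc v) =
      rename F Fin.castSucc (totalD D v) + mulVar F (Fin.last K) (rename F Fin.castSucc v) := by
  rw [← Fin.succAbove_last, totalD_rename_succAbove]

end TotalD

lemma rename_castSucc_single (ρ : Fin K → ℕ) (m : M) :
    rename F Fin.castSucc (Finsupp.single ρ m) =
      Finsupp.single (Fin.snoc (α := fun _ => ℕ) ρ 0) m := by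
  rw [rename_single]
  congr 1
  ext r
  refine Fin.lastCases ?_ (fun r => ?_) r
  · rw [Function.extend_apply' _ _ _ (by simp [Fin.castSucc_ne_last]), Fin.snoc_last,
      Pi.zero_apply]
  · rw [(Fin.castSucc_injective K).extend_apply, Fin.snoc_castSucc]

lemma mulVar_last_pow_rename_single (ρ : Fin K → ℕ) (n : ℕ) (m : M) :
    (mulVar F (Fin.last K) ^ n) (rename F Fin.castSucc (Finsupp.single ρ m)) =
      Finsupp.single (Fin.snoc (α := fun _ => ℕ) ρ n) m := by
  rw [rename_castSucc_single, mulVar_pow_single]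
  congr 1
  ext r
  refine Fin.lastCases ?_ (fun r => ?_) r <;> simp [(Fin.castSucc_lt_last _).ne]

variable (F M) in
@[elab_as_elim]
lemma Poly.induction_last {p : Poly (Fin (K + 1)) M → Prop} (v : Poly (Fin (K + 1)) M)
    (of_rename : ∀ u : Poly (Fin K) M, p (rename F Fin.castSucc u))
    (add : ∀ v w : Poly (Fin (K + 1)) M, p v → p w → p (v + w))
    (mulVar_last : ∀ v : Poly (Fin (K + 1)) M, p v → p (mulVar F (Fin.last K) v)) : p v := by
  induction v using Finsupp.induction_linear with
  | zero => simpa using of_rename 0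
  | add v w hv hw => exact add v w hv hw
  | single ν m =>
    have hpow (n : ℕ) : p ((mulVar F (Fin.last K) ^ n)
        (rename F Fin.castSucc (Finsupp.single (Fin.init ν) m))) := by
      induction n with
      | zero => exact of_rename _
      | succ n ih =>
        rw [pow_succ', Module.End.mul_apply]
        exact mulVar_last _ ih
    simpa only [mulVar_last_pow_rename_single, Fin.snoc_init_self] using hpow (ν (Fin.last K))

/-- The linear map on the polynomials in `λ_0, …, λ_K` which is `f` on the polynomials without
`λ_K` and substitutes the endomorphism `W` for `λ_K`, written to the left. -/
noncomputable def substLast (f : Poly (Fin K) M →ₗ[F] N) (W : Module.End F N) :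
    Poly (Fin (K + 1)) M →ₗ[F] N :=
  Finsupp.lsum F fun ν => (W ^ ν (Fin.last K)) ∘ₗ f ∘ₗ Finsupp.lsingle (Fin.init ν)

section SubstLast

variable (f : Poly (Fin K) M →ₗ[F] N) (W : Module.End F N)

lemma substLast_single (ρ : Fin K → ℕ) (n : ℕ) (m : M) :
    substLast f W (Finsupp.single (Fin.snoc (α := fun _ => ℕ) ρ n) m) =
      (W ^ n) (f (Finsupp.single ρ m)) := by
  simp [substLast]

lemma substLast_rename (u : Poly (Fin K) M) :
    substLast f W (rename F Fin.castSucc u) = f u := by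
  induction u using Finsupp.induction_linear with
  | zero => simp
  | add u v hu hv => simp [hu, hv]
  | single ρ m => rw [rename_castSucc_single, substLast_single, pow_zero, Module.End.one_apply]

lemma substLast_mulVar_last (v : Poly (Fin (K + 1)) M) :
    substLast f W (mulVar F (Fin.last K) v) = W (substLast f W v) := by
  induction v using Finsupp.induction_linear with
  | zero => simp
  | add v w hv hw => simp [hv, hw]
  | single ν m =>
    rw [← Fin.snoc_init_self ν, ← mulVar_last_pow_rename_single (F := F), ← Module.End.mul_apply,
      ← pow_succ', mulVar_last_pow_rename_single, mulVar_last_pow_rename_single, substLast_single,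
      substLast_single, pow_succ', Module.End.mul_apply]

end SubstLast

section EvalDagger

variable (D : Module.End F M)

/-- The substitution `λ_K ↦ λ† = -λ_0 - ⋯ - λ_{K-1} - ∂^M`, with `∂^M` moved to the left. -/
noncomputable def evalDagger : Poly (Fin (K + 1)) M →ₗ[F] Poly (Fin K) M :=
  substLast LinearMap.id (-totalD D)

@[simp]
lemma evalDagger_rename (u : Poly (Fin K) M) : evalDagger D (rename F Fin.castSucc u) = u :=
  substLast_rename _ _ u

lemma evalDagger_mulVar_last (v : Poly (Fin (K + 1)) M) :
    evalDagger D (mulVar F (Fin.last K) v) = -totalD D (evalDagger D v) :=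
  substLast_mulVar_last _ _ v

lemma evalDagger_mulVar_castSucc (i : Fin K) (v : Poly (Fin (K + 1)) M) :
    evalDagger D (mulVar F i.castSucc v) = mulVar F i (evalDagger D v) := by
  induction v using Poly.induction_last F M with
  | of_rename u => simp [← rename_mulVar (Fin.castSucc_injective K)]
  | add v w hv hw => simp [hv, hw]
  | mulVar_last v ih => simp [mulVar_mulVar i.castSucc, evalDagger_mulVar_last, ih, totalD_mulVar]

lemma evalDagger_mapCoeff (v : Poly (Fin (K + 1)) M) :
    evalDagger D (mapCoeff D v) = mapCoeff D (evalDagger D v) := by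
  induction v using Poly.induction_last F M with
  | of_rename u => simp [← rename_mapCoeff]
  | add v w hv hw => simp [hv, hw]
  | mulVar_last v ih => simp [mapCoeff_mulVar, evalDagger_mulVar_last, ih, totalD_mapCoeff]

lemma evalDagger_totalD (v : Poly (Fin (K + 1)) M) : evalDagger D (totalD D v) = 0 := by
  rw [totalD_apply, Fin.sum_univ_castSucc]
  simp [evalDagger_mapCoeff, evalDagger_mulVar_castSucc, evalDagger_mulVar_last, totalD_apply]

lemma exists_eq_rename_add_totalD (v : Poly (Fin (K + 1)) M) :
    ∃ w, v = rename F Fin.castSucc (evalDagger D v) + totalD D w := by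
  induction v using Poly.induction_last F M with
  | of_rename u => exact ⟨0, by simp⟩
  | add v w hv hw =>
    obtain ⟨v', hv'⟩ := hv
    obtain ⟨w', hw'⟩ := hw
    refine ⟨v' + w', ?_⟩
    rw [map_add, map_add, map_add, add_add_add_comm, ← hv', ← hw']
  | mulVar_last v ih =>
    obtain ⟨w, hw⟩ := ih
    refine ⟨mulVar F (Fin.last K) w + rename F Fin.castSucc (evalDagger D v), ?_⟩
    conv_lhs => rw [hw]
    rw [evalDagger_mulVar_last, map_add (totalD D), totalD_rename_castSucc, totalD_mulVar,
      map_add, map_neg]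
    abel

lemma ker_evalDagger :
    LinearMap.ker (evalDagger D : Poly (Fin (K + 1)) M →ₗ[F] _) = LinearMap.range (totalD D) := by
  ext v
  refine ⟨fun hv => ?_, ?_⟩
  · obtain ⟨w, hw⟩ := exists_eq_rename_add_totalD D v
    exact ⟨w, by simpa [LinearMap.mem_ker.1 hv] using hw.symm⟩
  · rintro ⟨w, rfl⟩
    exact evalDagger_totalD D w

/-- Since `v` is congruent modulo `∂` to `evalDagger D v`, a map compatible with `∂` may be
evaluated at the latter before substituting `λ†`. -/
lemma evalDagger_map_eq {n : ℕ} {Φ : Poly (Fin (K + 1)) M →ₗ[F] Poly (Fin (n + 1)) M}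
    (hΦ : ∀ v, Φ (totalD D v) = totalD D (Φ v)) (v : Poly (Fin (K + 1)) M) :
    evalDagger D (Φ v) = evalDagger D (Φ (rename F Fin.castSucc (evalDagger D v))) := by
  obtain ⟨w, hw⟩ := exists_eq_rename_add_totalD D v
  conv_lhs => rw [hw, map_add, map_add, hΦ, evalDagger_totalD, add_zero]

end EvalDagger

/-- The `λ_i`-action `v ↦ B_{λ_i} v` on polynomials, where `B m` is the polynomial `B_λ m` in one
variable, and `λ_i` is a new variable. -/
noncomputable def actVar (B : M →ₗ[F] ℕ →₀ N) (i : Fin (K + 1)) :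
    Poly (Fin K) M →ₗ[F] Poly (Fin (K + 1)) N :=
  (Finsupp.domLCongr ((Equiv.prodComm _ _).trans (Fin.insertNthEquiv (fun _ => ℕ) i))).toLinearMap
    ∘ₗ (Finsupp.curryLinearEquiv F).symm.toLinearMap ∘ₗ mapCoeff B

lemma actVar_apply (B : M →ₗ[F] ℕ →₀ N) (i : Fin (K + 1)) (v : Poly (Fin K) M)
    (ν : Fin (K + 1) → ℕ) : actVar B i v ν = B (v (i.removeNth ν)) (ν i) := by
  simp [actVar, Finsupp.domLCongr_apply]

lemma actVar_totalD {B : M →ₗ[F] ℕ →₀ M} {D : Module.End F M}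
    (hB : ∀ m n, B (D m) n = D (B m n) + if n = 0 then 0 else B m (n - 1)) (i : Fin (K + 1))
    (v : Poly (Fin K) M) : actVar B i (totalD D v) = totalD D (actVar B i v) := by
  ext ν
  simp only [actVar_apply, totalD_coeff, Fin.sum_univ_succAbove _ i, map_add, Finsupp.add_apply,
    hB, map_sum, Finsupp.finsetSum_apply, Function.update_self, Fin.removeNth_update,
    Fin.removeNth_update_succAbove, Function.update_of_ne (Fin.succAbove_ne i _).symm, add_assoc]
  congr 2
  refine Finset.sum_congr rfl fun r _ => ?_
  by_cases h : ν (i.succAbove r) = 0 <;> simp [h, Fin.removeNth_apply]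

lemma actVar_rename_castSucc (B : M →ₗ[F] ℕ →₀ N) (i : Fin (K + 1)) (v : Poly (Fin K) M) :
    actVar B i.castSucc (rename F Fin.castSucc v) = rename F Fin.castSucc (actVar B i v) := by
  ext ν
  rw [actVar_apply, rename_castSucc_apply, rename_castSucc_apply, actVar_apply,
    removeNth_castSucc_eq_snoc, Fin.snoc_last, Fin.init_snoc]
  split_ifs <;> simp [Fin.init]

variable (F) in
/-- The substitution of `λ_i + λ_j` for the last variable, the other variables being renamed to
those different from `λ_i`, `λ_j`; the index `i` is counted among those different from `j`. -/
noncomputable def mergeVars (j : Fin (K + 2)) (i : Fin (K + 1)) :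
    Poly (Fin (K + 1)) M →ₗ[F] Poly (Fin (K + 2)) M :=
  substLast (rename F j.succAbove ∘ₗ rename F i.succAbove)
    (mulVar F (j.succAbove i) + mulVar F j)

section MergeVars

variable (j : Fin (K + 2)) (i : Fin (K + 1))

lemma mergeVars_rename (u : Poly (Fin K) M) :
    mergeVars F j i (rename F Fin.castSucc u) = rename F j.succAbove (rename F i.succAbove u) :=
  substLast_rename _ _ u

lemma mergeVars_mulVar_last (v : Poly (Fin (K + 1)) M) :
    mergeVars F j i (mulVar F (Fin.last K) v) =
      mulVar F (j.succAbove i) (mergeVars F j i v) + mulVar F j (mergeVars F j i v) :=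
  substLast_mulVar_last _ _ v

lemma mergeVars_totalD (D : Module.End F M) (v : Poly (Fin (K + 1)) M) :
    mergeVars F j i (totalD D v) = totalD D (mergeVars F j i v) := by
  induction v using Poly.induction_last F M with
  | of_rename u =>
    simp [mergeVars_rename, totalD_rename_castSucc, totalD_rename_succAbove, mergeVars_mulVar_last,
      rename_mulVar Fin.succAbove_right_injective, add_assoc]
  | add v w hv hw => simp [hv, hw]
  | mulVar_last v ih => simp [totalD_mulVar, mergeVars_mulVar_last, ih]

lemma mergeVars_apply (v : Poly (Fin (K + 1)) M) (ν : Fin (K + 2) → ℕ) :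
    mergeVars F j i v ν =
      ((ν (j.succAbove i) + ν j).choose (ν (j.succAbove i)) : F) •
        v (Fin.snoc (α := fun _ => ℕ) (i.removeNth (j.removeNth ν)) (ν (j.succAbove i) + ν j)) := by
  induction v using Poly.induction_last F M generalizing ν with
  | of_rename u =>
    rw [mergeVars_rename, rename_succAbove_apply, rename_succAbove_apply, rename_castSucc_apply,
      Fin.removeNth_apply]
    by_cases hj : ν j = 0 <;> by_cases hi : ν (j.succAbove i) = 0 <;> simp [hi, hj]
  | add v w hv hw => simp [hv, hw]
  | mulVar_last v ih =>
    rw [mergeVars_mulVar_last, Finsupp.add_apply, mulVar_apply, mulVar_apply, ih, ih]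
    simp only [Function.update_self, Fin.removeNth_update, Fin.removeNth_update_succAbove,
      Function.update_of_ne (Fin.succAbove_ne j i),
      Function.update_of_ne (Fin.succAbove_ne j i).symm, mulVar_apply, Fin.snoc_last,
      Fin.update_snoc_last]
    rcases ν (j.succAbove i) with _ | x <;> rcases ν j with _ | y
    · simp
    · simp
    · simp
    · have hsum : x + 1 - 1 + (y + 1) = x + 1 + y := by omega
      rw [hsum, ← add_assoc (x + 1), Nat.choose_succ_succ, Nat.cast_add, add_smul]
      rfl

end MergeVars

section EvalDaggerTerms

variable (D : Module.End F M)

lemma evalDagger_actVar_castSucc {B : M →ₗ[F] ℕ →₀ M}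
    (hB : ∀ m n, B (D m) n = D (B m n) + if n = 0 then 0 else B m (n - 1)) (i : Fin (K + 1))
    (v : Poly (Fin (K + 1)) M) :
    evalDagger D (actVar B i.castSucc v) = actVar B i (evalDagger D v) := by
  rw [evalDagger_map_eq D (actVar_totalD hB _), actVar_rename_castSucc, evalDagger_rename]

lemma evalDagger_mergeVars (j : Fin (K + 2)) (i : Fin (K + 1)) (v : Poly (Fin (K + 1)) M) :
    evalDagger D (mergeVars F j i v) =
      evalDagger D (rename F j.succAbove (rename F i.succAbove (evalDagger D v))) := by
  rw [evalDagger_map_eq D (mergeVars_totalD j i D), mergeVars_rename]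

lemma evalDagger_expandVar (i : Fin K) (w : ℕ →₀ Poly (Fin (K + 1)) M) :
    evalDagger D (expandVar F i.castSucc w) =
      expandVar F i (Finsupp.mapRange.linearMap (evalDagger D) w) := by
  induction w using Finsupp.induction_linear with
  | zero => simp
  | add w w' hw hw' => rw [map_add, map_add, map_add, map_add, hw, hw']
  | single p w =>
    rw [Finsupp.mapRange.linearMap_apply, Finsupp.mapRange_single, expandVar_single,
      expandVar_single]
    induction p with
    | zero => simp
    | succ p ih =>
      simp only [pow_succ', Module.End.mul_apply, evalDagger_mulVar_castSucc, ih]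

end EvalDaggerTerms

lemma expandVar_rename_apply (i : Fin (K + 1)) (w : ℕ →₀ Poly (Fin K) M)
    (ν : Fin (K + 1) → ℕ) :
    expandVar F i (Finsupp.mapRange.linearMap (rename F i.succAbove) w) ν =
      w (ν i) (i.removeNth ν) := by
  rw [expandVar_apply, Finset.sum_eq_single_of_mem (ν i) (by simp)]
  · simp [rename_succAbove_apply, Fin.removeNth_update]
  · intro p hp hpν
    rw [Finset.mem_range] at hp
    simp [rename_succAbove_apply, show ν i - p ≠ 0 by omega]

section PowerFormula

lemma sum_map_pow {G S : Type*} [CommMonoid G] [Semiring S] [DecidableEq ι] (φ : G →* S)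
    (g : ι → G) (s : Finset ι) (n : ℕ) :
    (∑ i ∈ s, φ (g i)) ^ n =
      ∑ μ ∈ s.piAntidiag n, Nat.multinomial s μ • φ (∏ i ∈ s, g i ^ μ i) := by
  have hcomm : (s : Set ι).Pairwise (Function.onFun Commute fun i => φ (g i)) :=
    fun i _ j _ _ => (Commute.all (g i) (g j)).map φ
  rw [Finset.sum_pow_eq_sum_piAntidiag_of_commute s _ hcomm]
  refine Finset.sum_congr rfl fun μ _ => ?_
  rw [← Finset.noncommProd_eq_prod, nsmul_eq_mul]
  simp only [← map_pow]
  exact congrArg _ (Finset.map_noncommProd _ _ _ φ).symm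

variable (D : Module.End F M)

lemma mulMonomial_commute_mapCoeff_pow (μ : Multiplicative (ι → ℕ)) (s : ℕ) :
    Commute (mulMonomial F μ : Module.End F (Poly ι M)) (mapCoeff D ^ s) :=
  Commute.pow_right (LinearMap.ext fun v => (mapCoeff_mulMonomial D μ v).symm) s

lemma totalD_pow_single (n : ℕ) (ρ : Fin K → ℕ) (m : M) :
    (totalD D ^ n) (Finsupp.single ρ m) =
      ∑ μ ∈ Finset.piAntidiag (Finset.univ : Finset (Fin (K + 1))) n,
        Nat.multinomial Finset.univ μ •
          Finsupp.single (Fin.init μ + ρ) ((D ^ μ (Fin.last K)) m) := by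
  let φ : Multiplicative (Fin K → ℕ) × Multiplicative ℕ →* Module.End F (Poly (Fin K) M) :=
    MonoidHom.noncommCoprod (mulMonomial F) (powersHom _ (mapCoeff D)) fun μ s =>
      mulMonomial_commute_mapCoeff_pow D μ s.toAdd
  let g : Fin (K + 1) → Multiplicative (Fin K → ℕ) × Multiplicative ℕ :=
    Fin.snoc (fun i => (Multiplicative.ofAdd (Pi.single i 1), 1)) (1, Multiplicative.ofAdd 1)
  have hφ x : φ x = mulMonomial F x.1 * mapCoeff D ^ x.2.toAdd := rfl
  have htotalD : totalD D = ∑ r, φ (g r) := by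
    simp [totalD, Fin.sum_univ_castSucc, g, hφ, mulVar, add_comm]
  have hprod (μ : Fin (K + 1) → ℕ) : ∏ r, g r ^ μ r =
      (Multiplicative.ofAdd (Fin.init μ), Multiplicative.ofAdd (μ (Fin.last K))) := by
    rw [Fin.prod_univ_castSucc]
    ext r
    · simp [g, Prod.fst_prod, Pi.single_apply, Fin.init]
    · simp [g, Prod.snd_prod]
  rw [htotalD, sum_map_pow, LinearMap.sum_apply]
  refine Finset.sum_congr rfl fun μ _ => ?_
  simp [hprod, hφ, mapCoeff_pow_single]

lemma evalDagger_single (ρ : Fin K → ℕ) (n : ℕ) (m : M) :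
    evalDagger D (Finsupp.single (Fin.snoc (α := fun _ => ℕ) ρ n) m) =
      ((-1 : F) ^ n) • (totalD D ^ n) (Finsupp.single ρ m) := by
  rw [evalDagger, substLast_single, LinearMap.id_apply, ← neg_one_smul F (totalD D), smul_pow,
    LinearMap.smul_apply]

lemma mnom_init_last_eq_multinomial (μ : Fin (K + 1) → ℕ) :
    mnom (Fin.init μ) (μ (Fin.last K)) = Nat.multinomial Finset.univ μ := by
  simp [mnom, wt, Nat.multinomial, Fin.sum_univ_castSucc, Fin.prod_univ_castSucc, Fin.init]

end PowerFormula

end Polynomials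

section SubstDag

variable {F : Type*} [Field F] {M : Type*} [AddCommGroup M] [Module F M] {K : ℕ}
  (D : Module.End F M)

lemma snoc_add_right_injective (ρ : Fin K → ℕ) (n : ℕ) :
    Function.Injective fun s => (Fin.snoc ρ (n + s) : Fin (K + 1) → ℕ) := fun s t h => by
  simpa using (Fin.snoc_inj.1 h).2

lemma substDag_snoc_add (v w : Poly (Fin (K + 1)) M) (ν : Fin K → ℕ) :
    substDag D (fun ρ n => (v + w) (Fin.snoc ρ n)) ν =
      substDag D (fun ρ n => v (Fin.snoc ρ n)) ν + substDag D (fun ρ n => w (Fin.snoc ρ n)) ν := by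
  have hfin (u : Poly (Fin (K + 1)) M) (ρ : Fin K → ℕ) (n : ℕ) (c : ℕ → F) :
      (Function.support fun s => c s • (D ^ s) (u (Fin.snoc ρ (n + s)))).Finite := by
    refine (u.hasFiniteSupport.preimage (snoc_add_right_injective ρ n).injOn).subset
      fun s hs hu => hs ?_
    simp [show u (Fin.snoc ρ (n + s)) = 0 from hu]
  simp only [substDag, Finsupp.add_apply, map_add, smul_add]
  rw [← Finset.sum_add_distrib]
  exact Finset.sum_congr rfl fun ρ _ => finsum_add_distrib (hfin v ..) (hfin w ..)

lemma wt_init_add_last (μ : Fin (K + 1) → ℕ) :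
    wt (Fin.init μ) + μ (Fin.last K) = ∑ r, μ r := by
  simp [wt, Fin.init, Fin.sum_univ_castSucc]

lemma eq_of_init_eq_of_sum_eq {μ μ' : Fin (K + 1) → ℕ} (hinit : Fin.init μ = Fin.init μ')
    (hsum : ∑ r, μ r = ∑ r, μ' r) : μ = μ' := by
  rw [← wt_init_add_last, ← wt_init_add_last, hinit, add_right_inj] at hsum
  rw [← Fin.snoc_init_self μ, hinit, hsum, Fin.snoc_init_self]

lemma substDag_snoc_single (κ : Fin K → ℕ) (n : ℕ) (m : M) (ν : Fin K → ℕ) :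
    substDag D (fun ρ p => Finsupp.single (Fin.snoc (α := fun _ => ℕ) κ n) m (Fin.snoc ρ p)) ν =
      evalDagger D (Finsupp.single (Fin.snoc (α := fun _ => ℕ) κ n) m) ν := by
  rw [evalDagger_single, totalD_pow_single, substDag, Finsupp.smul_apply, Finsupp.finsetSum_apply]
  by_cases h : ∃ μ : Fin (K + 1) → ℕ, Fin.init μ + κ = ν ∧ ∑ r, μ r = n
  · obtain ⟨μ, rfl, rfl⟩ := h
    rw [Finset.sum_eq_single_of_mem κ (by simp), finsum_eq_single _ (μ (Fin.last K)),
      Finset.sum_eq_single_of_mem μ (by simp)]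
    · simp [wt_init_add_last, mnom_init_last_eq_multinomial, mul_smul, ← Nat.cast_smul_eq_nsmul F]
    · intro μ' hμ' hne
      rw [Finsupp.smul_apply, Finsupp.single_eq_of_ne, smul_zero]
      exact fun hinit => hne <| eq_of_init_eq_of_sum_eq (add_right_cancel hinit).symm
        (Finset.mem_piAntidiag.1 hμ').1
    · intro s hs
      rw [Finsupp.single_eq_of_ne, map_zero, smul_zero]
      refine fun h => hs ?_
      have hsum := (Fin.snoc_inj.1 h).2
      simpa [← wt_init_add_last] using hsum
    · intro ρ _ hρ
      refine (finsum_congr fun s => ?_).trans finsum_zero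
      rw [Finsupp.single_eq_of_ne, map_zero, smul_zero]
      exact fun h => hρ (Fin.snoc_inj.1 h).1
  · rw [Finset.sum_eq_zero, Finset.sum_eq_zero, smul_zero]
    · intro μ hμ
      rw [Finsupp.smul_apply, Finsupp.single_eq_of_ne, smul_zero]
      exact fun hν => h ⟨μ, hν.symm, (Finset.mem_piAntidiag.1 hμ).1⟩
    · intro ρ hρ
      refine (finsum_congr fun s => ?_).trans finsum_zero
      rw [Finsupp.single_eq_of_ne, map_zero, smul_zero]
      intro hsnoc
      obtain ⟨rfl, rfl⟩ := Fin.snoc_inj.1 hsnoc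
      refine h ⟨Fin.snoc (fun r => ν r - ρ r) s, ?_, ?_⟩
      · ext r
        simp [Nat.sub_add_cancel (Finset.mem_Iic.1 hρ r)]
      · simp [Fin.sum_univ_castSucc, wt]

theorem evalDagger_apply (v : Poly (Fin (K + 1)) M) (ν : Fin K → ℕ) :
    evalDagger D v ν = substDag D (fun ρ n => v (Fin.snoc ρ n)) ν := by
  induction v using Finsupp.induction_linear with
  | zero => simp [substDag]
  | add v w hv hw => rw [substDag_snoc_add, ← hv, ← hw, map_add, Finsupp.add_apply]
  | single μ m => rw [← Fin.snoc_init_self μ, substDag_snoc_single]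

end SubstDag

section Differential

variable {F : Type*} [Field F] {A M : Type*} [AddCommGroup A] [Module F A] [AddCommGroup M]
  [Module F M] {L : LCA F A} {k : ℕ}

/-- Multilinear maps from `A^k` to the polynomials in `n` variables `λ_i` with coefficients in
`M`. Basic `k`-cochains have `n = k`, and `k`-`λ`-brackets have `n = k - 1`. -/
abbrev PolyMap (F A M : Type*) [Field F] [AddCommGroup A] [Module F A] [AddCommGroup M]
    [Module F M] (k n : ℕ) :=
  MultilinearMap F (fun _ : Fin k => A) (Poly (Fin n) M)

/-- The `λ`-action `m ↦ a_λ m` as a linear map to polynomials in `λ`. -/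
noncomputable def actPoly (R : LCAMod F L M) (a : A) : M →ₗ[F] ℕ →₀ M where
  toFun m := Finsupp.ofSupportFinite (R.act a m) (R.act_fin a m)
  map_add' m m' := Finsupp.ext <| congrFun (map_add (R.act a) m m')
  map_smul' c m := Finsupp.ext <| congrFun (map_smul (R.act a) c m)

@[simp]
lemma actPoly_apply (R : LCAMod F L M) (a : A) (m : M) (n : ℕ) :
    actPoly R a m n = R.act a m n :=
  rfl

variable (L) in
/-- The `λ`-bracket `[a_λ b]` as a polynomial in `λ`. -/
noncomputable def brPoly (a b : A) : ℕ →₀ A :=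
  Finsupp.ofSupportFinite (L.br a b) (L.br_fin a b)

@[simp]
lemma brPoly_apply (a b : A) (n : ℕ) : brPoly L a b n = L.br a b n :=
  rfl

variable (L) in
/-- The polynomial `γ_{…, λ_i + λ_j}(…, [a_i λ_i a_j])` of the double sum of `δγ`, for `i < j`. -/
noncomputable def bracketTerm (γ : PolyMap F A M (k + 1) (k + 1)) (a : Fin (k + 2) → A)
    (i : Fin (k + 1)) (j : Fin (k + 2)) : Poly (Fin (k + 2)) M :=
  expandVar F i.castSucc (Finsupp.mapRange.linearMap
    (mergeVars F j i ∘ₗ γ.curryRight (i.removeNth (j.removeNth a)))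
    (brPoly L (a i.castSucc) (a j)))

variable (L) in
/-- The double sum of `δγ` as a polynomial. -/
noncomputable def deltaPairPoly (γ : PolyMap F A M (k + 1) (k + 1)) (a : Fin (k + 2) → A) :
    Poly (Fin (k + 2)) M :=
  ∑ i : Fin (k + 1), ∑ j : Fin (k + 2),
    if i.castSucc < j then ((-1 : F) ^ (k + i + j : ℕ)) • bracketTerm L γ a i j else 0

/-- The differential `δγ` with polynomial values. -/
noncomputable def deltaPoly (R : LCAMod F L M) (γ : PolyMap F A M (k + 1) (k + 1))
    (a : Fin (k + 2) → A) : Poly (Fin (k + 2)) M :=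
  ∑ i : Fin (k + 2), ((-1 : F) ^ (i : ℕ)) • actVar (actPoly R (a i)) i (γ (i.removeNth a)) +
    deltaPairPoly L γ a

lemma bracketTerm_apply (γ : PolyMap F A M (k + 1) (k + 1)) (a : Fin (k + 2) → A)
    {i : Fin (k + 1)} {j : Fin (k + 2)} (hij : i.castSucc < j) (ν : Fin (k + 2) → ℕ) :
    bracketTerm L γ a i j ν = ∑ p ∈ Finset.range (ν i.castSucc + 1),
      ((ν i.castSucc - p + ν j).choose (ν i.castSucc - p) : F) •
        γ (Fin.snoc (rm2 i j a) (L.br (a i.castSucc) (a j) p))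
          (Fin.snoc (rm2 i j ν) (ν i.castSucc - p + ν j)) := by
  have hi : j.succAbove i = i.castSucc := Fin.succAbove_of_castSucc_lt _ _ hij
  rw [bracketTerm, expandVar_apply]
  refine Finset.sum_congr rfl fun p _ => ?_
  rw [Finsupp.mapRange.linearMap_apply, Finsupp.mapRange_apply, LinearMap.comp_apply,
    MultilinearMap.curryRight_apply, mergeVars_apply, hi, Function.update_self,
    Function.update_of_ne hij.ne', rm2_eq_removeNth hij, rm2_eq_removeNth hij, brPoly_apply,
    ← hi, Fin.removeNth_update_succAbove, Fin.removeNth_update]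

lemma deltaPair_coe (R : LCAMod F L M) (γ : PolyMap F A M (k + 1) (k + 1)) (a : Fin (k + 2) → A) :
    deltaPair L R (fun a => ⇑(γ a)) a = deltaPairPoly L γ a := by
  ext ν
  rw [deltaPair, Fin.sum_univ_castSucc, deltaPairPoly, Finsupp.finsetSum_apply]
  simp only [(Fin.le_last _).not_gt, if_false, Finset.sum_const_zero, add_zero]
  refine Finset.sum_congr rfl fun i _ => ?_
  rw [Finsupp.finsetSum_apply]
  refine Finset.sum_congr rfl fun j _ => ?_
  split_ifs with hij
  · rw [Finsupp.smul_apply, bracketTerm_apply γ a hij]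
    rfl
  · rfl

lemma deltaRaw_coe (R : LCAMod F L M) (γ : PolyMap F A M (k + 1) (k + 1)) :
    deltaRaw L R (fun a => ⇑(γ a)) = fun a => ⇑(deltaPoly R γ a) := by
  ext a ν
  rw [deltaRaw, deltaPair_coe, deltaPoly, Finsupp.add_apply, Finsupp.finsetSum_apply]
  simp [rm1_eq_removeNth, actVar_apply]

lemma psiRaw_coe (R : LCAMod F L M) (g : (Fin (k + 1) → A) → Poly (Fin (k + 1)) M) :
    psiRaw R (fun a => ⇑(g a)) = fun a => ⇑(evalDagger R.D (g a)) := by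
  ext a ν
  rw [evalDagger_apply, psiRaw]

lemma evalDagger_bracketTerm (D : Module.End F M) (γ : PolyMap F A M (k + 1) (k + 1))
    (a : Fin (k + 2) → A) (i : Fin (k + 1)) (j : Fin (k + 2)) :
    evalDagger D (bracketTerm L γ a i j) =
      expandVar F i (Finsupp.mapRange.linearMap
        (evalDagger D ∘ₗ rename F j.succAbove ∘ₗ rename F i.succAbove ∘ₗ evalDagger D ∘ₗ
          γ.curryRight (i.removeNth (j.removeNth a)))
        (brPoly L (a i.castSucc) (a j))) := by
  rw [bracketTerm, evalDagger_expandVar]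
  congr 1
  ext p
  simp [evalDagger_mergeVars]

lemma evalDagger_bracketTerm_last_apply (D : Module.End F M) (γ : PolyMap F A M (k + 1) (k + 1))
    (a : Fin (k + 2) → A) (i : Fin (k + 1)) (ν : Fin (k + 1) → ℕ) :
    evalDagger D (bracketTerm L γ a i (Fin.last (k + 1))) ν =
      evalDagger D (γ (Fin.snoc (rm1 i (Fin.init a))
        (L.br (a i.castSucc) (a (Fin.last (k + 1))) (ν i)))) (rm1 i ν) := by
  rw [evalDagger_bracketTerm, rm1_eq_removeNth, rm1_eq_removeNth, Fin.removeNth_last]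
  have hcomp : evalDagger D ∘ₗ rename F (Fin.last (k + 1)).succAbove ∘ₗ rename F i.succAbove ∘ₗ
      evalDagger D ∘ₗ γ.curryRight (i.removeNth (Fin.init a)) =
      rename F i.succAbove ∘ₗ evalDagger D ∘ₗ γ.curryRight (i.removeNth (Fin.init a)) := by
    ext b : 1
    simp
  rw [hcomp, Finsupp.mapRange.linearMap_comp, LinearMap.comp_apply, expandVar_rename_apply]
  rfl

lemma rename_succAbove_succAbove_snoc {i : Fin (k + 1)} {j : Fin (k + 2)} (hij : i.castSucc < j)
    (v : Poly (Fin (k + 1)) M) (ρ : Fin (k + 2) → ℕ) (n : ℕ) :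
    rename F j.castSucc.succAbove (rename F i.castSucc.succAbove v) (Fin.snoc ρ n) =
      if ρ i.castSucc = 0 ∧ ρ j = 0 then v (Fin.snoc (rm2 i j ρ) n) else 0 := by
  rw [rename_succAbove_apply, rename_succAbove_apply, removeNth_castSucc_snoc,
    removeNth_castSucc_snoc, rm2_eq_removeNth hij, Fin.snoc_castSucc, Fin.snoc_castSucc,
    Fin.removeNth_apply, Fin.succAbove_of_castSucc_lt _ _ hij, ← ite_and]
  simp only [and_comm]

lemma dPair_coe (R : LCAMod F L M) (γ : PolyMap F A M (k + 1) (k + 1)) (a : Fin (k + 2) → A)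
    (ν : Fin (k + 1) → ℕ) :
    dPair L R (fun a => ⇑(evalDagger R.D (γ a))) a ν =
      ∑ i : Fin (k + 1), ∑ j : Fin (k + 1),
        if i < j then
          ((-1 : F) ^ (k + i + j : ℕ)) • evalDagger R.D (bracketTerm L γ a i j.castSucc) ν
        else 0 := by
  cases k with
  | zero => simp [dPair]
  | succ s =>
    rw [dPair]
    refine Finset.sum_congr rfl fun i _ => Finset.sum_congr rfl fun j _ => ?_
    split_ifs with hij
    · rw [add_right_comm _ _ 1, add_right_comm _ _ 1, evalDagger_bracketTerm, expandVar_apply]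
      congr 1
      refine Finset.sum_congr rfl fun p _ => ?_
      rw [Finsupp.mapRange.linearMap_apply, Finsupp.mapRange_apply, LinearMap.comp_apply,
        evalDagger_apply]
      congr 1
      ext ρ n
      obtain ⟨i, rfl⟩ := Fin.exists_castSucc_eq.2 (hij.trans_le j.le_last).ne
      simp only [LinearMap.comp_apply, MultilinearMap.curryRight_apply, brPoly_apply,
        rename_succAbove_succAbove_snoc hij, removeNth_castSucc_eq_snoc _ a,
        removeNth_castSucc_snoc, Fin.val_castSucc, rm2_eq_removeNth hij]
    · rfl

lemma evalDagger_deltaPairPoly_apply (R : LCAMod F L M) (γ : PolyMap F A M (k + 1) (k + 1))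
    (a : Fin (k + 2) → A) (ν : Fin (k + 1) → ℕ) :
    evalDagger R.D (deltaPairPoly L γ a) ν =
      dPair L R (fun a => ⇑(evalDagger R.D (γ a))) a ν +
        ∑ i : Fin (k + 1), ((-1 : F) ^ (i + 1 : ℕ)) • evalDagger R.D (γ (Fin.snoc
          (rm1 i (Fin.init a)) (L.br (a i.castSucc) (a (Fin.last (k + 1))) (ν i)))) (rm1 i ν) := by
  rw [dPair_coe, deltaPairPoly, ← Finset.sum_add_distrib, map_sum, Finsupp.finsetSum_apply]
  refine Finset.sum_congr rfl fun i _ => ?_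
  have hsign : (-1 : F) ^ (k + i + (k + 1) : ℕ) = (-1) ^ (i + 1 : ℕ) := by
    rw [show k + i + (k + 1) = 2 * k + (i + 1) by ring, pow_add, pow_mul, neg_one_sq, one_pow,
      one_mul]
  rw [Fin.sum_univ_castSucc, map_add, map_sum, Finsupp.add_apply, Finsupp.finsetSum_apply,
    if_pos (Fin.castSucc_lt_last i), map_smul, Finsupp.smul_apply, Fin.val_last, hsign,
    evalDagger_bracketTerm_last_apply]
  congr 1
  refine Finset.sum_congr rfl fun j _ => ?_
  simp only [Fin.castSucc_lt_castSucc_iff, Fin.val_castSucc]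
  split_ifs <;> simp

lemma evalDagger_actVar_last_apply {B : M →ₗ[F] ℕ →₀ M} {D : Module.End F M}
    (hB : ∀ m n, B (D m) n = D (B m n) + if n = 0 then 0 else B m (n - 1))
    (v : Poly (Fin (k + 1)) M) (ν : Fin (k + 1) → ℕ) :
    evalDagger D (actVar B (Fin.last (k + 1)) v) ν =
      substDag D (fun ρ n => if ρ (Fin.last k) = 0 then B (evalDagger D v (Fin.init ρ)) n else 0)
        ν := by
  rw [evalDagger_map_eq D (actVar_totalD hB _), evalDagger_apply]
  congr 1
  ext ρ n
  rw [actVar_apply, Fin.removeNth_last, Fin.init_snoc, Fin.snoc_last, rename_castSucc_apply]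
  split_ifs <;> simp

lemma dRaw_coe (R : LCAMod F L M) (γ : PolyMap F A M (k + 1) (k + 1)) :
    dRaw L R (fun a => ⇑(evalDagger R.D (γ a))) =
      fun a => ⇑(evalDagger R.D (deltaPoly R γ a)) := by
  ext a ν
  have hact (b : A) := R.sesq_right b
  rw [deltaPoly, map_add, Finsupp.add_apply, evalDagger_deltaPairPoly_apply,
    Fin.sum_univ_castSucc, map_add, Finsupp.add_apply, map_smul, Finsupp.smul_apply,
    evalDagger_actVar_last_apply (hact _), Fin.removeNth_last, map_sum, Finsupp.finsetSum_apply,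
    dRaw]
  have hfirst (i : Fin (k + 1)) : evalDagger R.D (((-1 : F) ^ (i.castSucc : ℕ)) •
      actVar (actPoly R (a i.castSucc)) i.castSucc (γ (i.castSucc.removeNth a))) ν =
        ((-1 : F) ^ (i : ℕ)) • R.act (a i.castSucc)
          (evalDagger R.D (γ (rm1 i a)) (rm1 i ν)) (ν i) := by
    rw [map_smul, evalDagger_actVar_castSucc R.D (hact _), Finsupp.smul_apply, actVar_apply,
      actPoly_apply, ← rm1_eq_removeNth, ← rm1_eq_removeNth, Fin.val_castSucc]
  simp only [hfirst, actPoly_apply, Fin.val_last]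
  abel

theorem psiRaw_deltaRaw_coe (R : LCAMod F L M) (γ : PolyMap F A M (k + 1) (k + 1)) :
    psiRaw R (deltaRaw L R fun a => ⇑(γ a)) = dRaw L R (psiRaw R fun a => ⇑(γ a)) := by
  rw [deltaRaw_coe, psiRaw_coe, psiRaw_coe, dRaw_coe]

theorem psiRaw_deltaRaw_const (R : LCAMod F L M) (m : M) :
    psiRaw R (deltaRaw L R fun (_ : Fin 0 → A) (_ : Fin 0 → ℕ) => m) = dZero R m := by
  ext a ν
  have hIic : Finset.Iic ν = {ν} := Finset.eq_singleton_iff_unique_mem.2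
    ⟨by simp, fun ρ _ => Subsingleton.elim ρ ν⟩
  have hsnoc (s : ℕ) : (Fin.snoc ν s : Fin 1 → ℕ) 0 = s := rfl
  simp [psiRaw, deltaRaw, deltaPair, dZero, substDag, mnom, wt, hIic, hsnoc,
    Nat.div_self (Nat.factorial_pos _)]

end Differential

section Cochains

variable {F : Type*} [Field F] {A M : Type*} [AddCommGroup A] [Module F A] [AddCommGroup M]
  [Module F M] {L : LCA F A} {k n : ℕ}

/-- The multilinear map with polynomial values given by a family of coefficients. -/
noncomputable def polyMapOfCoeff (c : (Fin k → A) → (Fin n → ℕ) → M)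
    (hadd : ∀ a i x y, c (Function.update a i (x + y)) =
      c (Function.update a i x) + c (Function.update a i y))
    (hsmul : ∀ a i (r : F) x, c (Function.update a i (r • x)) = r • c (Function.update a i x))
    (hfin : ∀ a, (Function.support (c a)).Finite) : PolyMap F A M k n :=
  MultilinearMap.mk' (fun a => Finsupp.ofSupportFinite (c a) (hfin a))
    (fun a i x y => Finsupp.ext <| congrFun (hadd a i x y))
    (fun a i r x => Finsupp.ext <| congrFun (hsmul a i r x))

variable (L) in
/-- The sesquilinear and skew-symmetric maps: basic `k`-cochains with polynomial values. -/
structure IsBasicCochain (γ : PolyMap F A M k k) : Prop where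
  sesq : ∀ a i x, γ (Function.update a i (L.D x)) = -mulVar F i (γ (Function.update a i x))
  skew : ∀ a (σ : Equiv.Perm (Fin k)), rename F σ (γ (a ∘ σ)) = Equiv.Perm.sign σ • γ a

lemma isGamma_coe_iff (R : LCAMod F L M) {γ : PolyMap F A M k k} :
    IsGamma R k (fun a => ⇑(γ a)) ↔ IsBasicCochain L γ := by
  refine ⟨fun h => ⟨fun a i x => ?_, fun a σ => ?_⟩, fun h => ⟨?_, ?_, ?_, ?_, ?_⟩⟩
  · ext ν
    rw [h.sesq, Finsupp.neg_apply, mulVar_apply]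
    split_ifs <;> simp
  · ext ν
    rw [rename_perm_apply, h.skew]
    rfl
  · intro a i x y
    rw [MultilinearMap.map_update_add, Finsupp.coe_add]
  · intro a i r x
    rw [MultilinearMap.map_update_smul, Finsupp.coe_smul]
  · exact fun a => (γ a).hasFiniteSupport
  · intro a i x ν
    rw [h.sesq, Finsupp.neg_apply, mulVar_apply]
    split_ifs <;> simp
  · intro a ν σ
    rw [← rename_perm_apply (F := F), h.skew]
    rfl

lemma IsGamma.exists_eq_coe {R : LCAMod F L M} {γ : (Fin k → A) → (Fin k → ℕ) → M}
    (h : IsGamma R k γ) : ∃ γ' : PolyMap F A M k k, IsBasicCochain L γ' ∧ γ = fun a => ⇑(γ' a) := by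
  let γ' := polyMapOfCoeff γ h.map_add h.map_smul h.fin
  exact ⟨γ', (isGamma_coe_iff R (γ := γ')).1 h, rfl⟩

lemma IsBasicCochain.sub {γ θ : PolyMap F A M k k} (hγ : IsBasicCochain L γ)
    (hθ : IsBasicCochain L θ) : IsBasicCochain L (γ - θ) where
  sesq a i x := by
    simp only [sub_apply, hγ.sesq, hθ.sesq, map_sub]
    abel
  skew a σ := by simp only [sub_apply, map_sub, hγ.skew, hθ.skew, smul_sub]

lemma GammaD_coe (R : LCAMod F L M) (γ : PolyMap F A M k k) :
    GammaD R (fun a => ⇑(γ a)) = fun a => ⇑(totalD R.D (γ a)) := by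
  ext a ν
  rw [GammaD, totalD_coeff]

theorem IsBasicCochain.exists_totalD_eq {D : Module.End F M} {γ : PolyMap F A M (k + 1) (k + 1)}
    (hγ : IsBasicCochain L γ) (hker : ∀ a, evalDagger D (γ a) = 0) :
    ∃ η : PolyMap F A M (k + 1) (k + 1), IsBasicCochain L η ∧ ∀ a, totalD D (η a) = γ a := by
  have hinj : Function.Injective (totalD D : Module.End F (Poly (Fin (k + 1)) M)) :=
    totalD_injective D
  obtain ⟨g, hg⟩ := (totalD D).exists_leftInverse_of_injective (LinearMap.ker_eq_bot.2 hinj)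
  have hη a : totalD D (g (γ a)) = γ a := by
    obtain ⟨w, hw⟩ : γ a ∈ LinearMap.range (totalD D) :=
      ker_evalDagger D ▸ LinearMap.mem_ker.2 (hker a)
    rw [← hw, ← LinearMap.comp_apply g, hg, LinearMap.id_apply]
  refine ⟨g.compMultilinearMap γ, ⟨fun a i x => hinj ?_, fun a σ => hinj ?_⟩, hη⟩
  · rw [LinearMap.compMultilinearMap_apply, hη, map_neg, totalD_mulVar,
      LinearMap.compMultilinearMap_apply, hη, hγ.sesq]
  · simp only [LinearMap.compMultilinearMap_apply, Units.smul_def, map_zsmul, totalD_rename_perm,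
      hη, hγ.skew]

theorem IsGamma.exists_sub_eq_GammaD {R : LCAMod F L M}
    {γ θ : (Fin (k + 1) → A) → (Fin (k + 1) → ℕ) → M} (hγ : IsGamma R (k + 1) γ)
    (hθ : IsGamma R (k + 1) θ) (h : psiRaw R γ = psiRaw R θ) :
    ∃ η, IsGamma R (k + 1) η ∧ γ - θ = GammaD R η := by
  obtain ⟨γ, hγ', rfl⟩ := hγ.exists_eq_coe
  obtain ⟨θ, hθ', rfl⟩ := hθ.exists_eq_coe
  rw [psiRaw_coe, psiRaw_coe] at h
  obtain ⟨η, hη, hηγθ⟩ := (hγ'.sub hθ').exists_totalD_eq (D := R.D) fun a => by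
    rw [sub_apply, map_sub, sub_eq_zero, DFunLike.coe_injective (congrFun h a)]
  refine ⟨_, (isGamma_coe_iff R).2 hη, ?_⟩
  rw [GammaD_coe]
  ext a ν
  rw [hηγθ]
  rfl

end Cochains

section FreeLift

variable {F : Type*} [Field F] {U N N' : Type*} [AddCommGroup U] [Module F U] [AddCommGroup N]
  [Module F N] [AddCommGroup N'] [Module F N']

/-- The extension of `f : U → N` to the map `∑ ∂^n u_n ↦ ∑ W^n (f u_n)` on the free
`F[∂]`-module `F[∂] ⊗ U`, which is encoded as `ℕ →₀ U`. -/
noncomputable def freeLift (W : Module.End F N) : (U →ₗ[F] N) →ₗ[F] (ℕ →₀ U) →ₗ[F] N :=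
  (Finsupp.lsum F).toLinearMap ∘ₗ LinearMap.pi fun n => LinearMap.compRight F (W ^ n)

@[simp]
lemma freeLift_single (W : Module.End F N) (f : U →ₗ[F] N) (n : ℕ) (u : U) :
    freeLift W f (Finsupp.single n u) = (W ^ n) (f u) := by
  simp [freeLift]

lemma freeLift_mapDomain_succ (W : Module.End F N) (f : U →ₗ[F] N) (q : ℕ →₀ U) :
    freeLift W f (Finsupp.mapDomain (· + 1) q) = W (freeLift W f q) := by
  induction q using Finsupp.induction_linear with
  | zero => simp
  | add p q hp hq => simp [Finsupp.mapDomain_add, hp, hq]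
  | single n u => simp [pow_succ']

lemma map_freeLift {W : Module.End F N} {W' : Module.End F N'} {h : N →ₗ[F] N'}
    (hW : ∀ x, h (W x) = W' (h x)) (f : U →ₗ[F] N) (q : ℕ →₀ U) :
    h (freeLift W f q) = freeLift W' (h ∘ₗ f) q := by
  induction q using Finsupp.induction_linear with
  | zero => simp
  | add p q hp hq => simp [hp, hq]
  | single n u =>
    have hpow (x : N) : h ((W ^ n) x) = (W' ^ n) (h x) := by
      induction n with
      | zero => simp
      | succ n ih => simp [pow_succ', hW, ih]
    simp [hpow]

end FreeLift

section Torsion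

variable {F : Type*} [Field F] {A : Type*} [AddCommGroup A] [Module F A]

/-- The torsion of the `F[∂]`-module `A`, as an `F`-subspace. -/
noncomputable def torsionSubmodule (L : LCA F A) : Submodule F A :=
  ((Submodule.torsion (Polynomial F) (Module.AEval' L.D)).restrictScalars F).comap
    (Module.AEval'.of L.D).toLinearMap

variable {L : LCA F A}

lemma mem_torsionSubmodule {x : A} : x ∈ torsionSubmodule L ↔ IsTor L x := by
  have hsmul (p : Polynomial F) :
      p • Module.AEval'.of L.D x = 0 ↔ Polynomial.aeval L.D p x = 0 := by
    rw [← Module.AEval.of_aeval_smul, EmbeddingLike.map_eq_zero_iff]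
    rfl
  simp [torsionSubmodule, IsTor, hsmul, Submonoid.smul_def]

lemma map_mem_torsionSubmodule {x : A} (hx : x ∈ torsionSubmodule L) :
    L.D x ∈ torsionSubmodule L := by
  have hX : Polynomial.X • Module.AEval'.of L.D x ∈ Submodule.torsion (Polynomial F) _ :=
    Submodule.smul_mem _ _ hx
  rwa [Module.AEval'.X_smul_of] at hX

lemma Decomposes.exists_freePart (h : Decomposes L) :
    ∃ (U : Submodule F A) (π : A →ₗ[F] ℕ →₀ U),
      (∀ a, π (L.D a) = Finsupp.mapDomain (· + 1) (π a)) ∧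
        ∀ a, IsTor L (a - freeLift L.D U.subtype (π a)) := by
  obtain ⟨U, hU⟩ := h
  let sum : (torsionSubmodule L × (ℕ →₀ U)) →ₗ[F] A :=
    (torsionSubmodule L).subtype.coprod (freeLift L.D U.subtype)
  have hsum : Function.Bijective sum :=
    hU.comp ((Equiv.subtypeEquivRight fun _ => mem_torsionSubmodule).prodCongr
      (Equiv.refl _)).bijective
  let e := LinearEquiv.ofBijective sum hsum
  have he (t q) : e (t, q) = t + freeLift L.D U.subtype q := LinearMap.coprod_apply ..
  refine ⟨U, LinearMap.snd F _ _ ∘ₗ e.symm.toLinearMap, fun a => ?_, fun a => ?_⟩ <;>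
    obtain ⟨⟨t, q⟩, rfl⟩ := e.surjective a
  · have hD : L.D (e (t, q)) =
        e (⟨L.D t, map_mem_torsionSubmodule t.2⟩, Finsupp.mapDomain (· + 1) q) := by
      simp [he, freeLift_mapDomain_succ]
    simp [hD]
  · rw [LinearMap.comp_apply, LinearEquiv.coe_coe, e.symm_apply_apply, he]
    simpa using mem_torsionSubmodule.1 t.2

end Torsion

section Brackets

variable {F : Type*} [Field F] {A M : Type*} [AddCommGroup A] [Module F A] [AddCommGroup M]
  [Module F M] {L : LCA F A} {k : ℕ} {D : Module.End F M}

variable (L D) in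
/-- The maps satisfying (B1), (B2) and (B3): the `(k+1)`-`λ`-brackets with polynomial values. -/
structure IsPolyBracket (C : PolyMap F A M (k + 1) k) : Prop where
  sesq : ∀ a (i : Fin k) x, C (Function.update a i.castSucc (L.D x)) =
    -mulVar F i (C (Function.update a i.castSucc x))
  sesq_last : ∀ a x, C (Function.update a (Fin.last k) (L.D x)) =
    totalD D (C (Function.update a (Fin.last k) x))
  skew : ∀ a (σ : Equiv.Perm (Fin (k + 1))),
    evalDagger D (rename F σ (rename F Fin.castSucc (C (a ∘ σ)))) = Equiv.Perm.sign σ • C a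

lemma IsCBr.isPolyBracket {R : LCAMod F L M} {C : PolyMap F A M (k + 1) k}
    (h : IsCBr R k fun a => ⇑(C a)) : IsPolyBracket L R.D C where
  sesq a i x := by
    ext ν
    rw [h.sesq₁, Finsupp.neg_apply, mulVar_apply]
    split_ifs <;> simp
  sesq_last a x := by
    ext ν
    rw [h.sesq₂, totalD_coeff]
  skew a σ := by
    ext ν
    rw [Units.smul_def, Finsupp.smul_apply, h.skew a ν σ, smul_smul, Int.units_coe_mul_self,
      one_smul, evalDagger_apply]
    simp only [rename_perm_apply, rename_castSucc_apply]
    rfl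

lemma IsCBr.exists_eq_coe {R : LCAMod F L M} {c : (Fin (k + 1) → A) → (Fin k → ℕ) → M}
    (h : IsCBr R k c) :
    ∃ C : PolyMap F A M (k + 1) k, IsPolyBracket L R.D C ∧ c = fun a => ⇑(C a) := by
  let C := polyMapOfCoeff c h.map_add h.map_smul h.fin
  exact ⟨C, IsCBr.isPolyBracket (C := C) h, rfl⟩

/-- The cochain obtained from a `λ`-bracket by writing its last argument as `∑ ∂^n u_n` and
replacing `∂` by `-λ_k`. -/
noncomputable def liftLast {U : Submodule F A} (π : A →ₗ[F] ℕ →₀ U) (C : PolyMap F A M (k + 1) k) :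
    PolyMap F A M (k + 1) (k + 1) :=
  ((LinearMap.lcomp F _ π ∘ₗ freeLift (-mulVar F (Fin.last k)) ∘ₗ LinearMap.lcomp F _ U.subtype ∘ₗ
    LinearMap.compRight F (rename F Fin.castSucc)).compMultilinearMap C.curryRight).uncurryRight

lemma liftLast_apply {U : Submodule F A} (π : A →ₗ[F] ℕ →₀ U) (C : PolyMap F A M (k + 1) k)
    (a : Fin (k + 1) → A) :
    liftLast π C a = freeLift (-mulVar F (Fin.last k))
      (rename F Fin.castSucc ∘ₗ C.curryRight (Fin.init a) ∘ₗ U.subtype) (π (a (Fin.last k))) :=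
  rfl

lemma evalDagger_liftLast {U : Submodule F A} {π : A →ₗ[F] ℕ →₀ U}
    (hπ : ∀ a, IsTor L (a - freeLift L.D U.subtype (π a))) {C : PolyMap F A M (k + 1) k}
    (hC : IsPolyBracket L D C) (htor : ∀ a, IsTor L (a (Fin.last k)) → C a = 0)
    (a : Fin (k + 1) → A) :
    evalDagger D (liftLast π C a) = C a := by
  have hsubst (v : Poly (Fin (k + 1)) M) :
      evalDagger D ((-mulVar F (Fin.last k)) v) = totalD D (evalDagger D v) := by
    rw [LinearMap.neg_apply, map_neg, evalDagger_mulVar_last, neg_neg]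
  have hC_last (x : A) : C.curryRight (Fin.init a) (L.D x) =
      totalD D (C.curryRight (Fin.init a) x) := by
    have h := hC.sesq_last (Fin.snoc (α := fun _ => A) (Fin.init a) x) x
    rwa [Fin.update_snoc_last, Fin.update_snoc_last] at h
  have hC_tor {x : A} (hx : IsTor L x) : C.curryRight (Fin.init a) x = 0 :=
    htor _ (by simpa using hx)
  have hcomp : evalDagger D ∘ₗ rename F Fin.castSucc ∘ₗ C.curryRight (Fin.init a) ∘ₗ U.subtype =
      C.curryRight (Fin.init a) ∘ₗ U.subtype := by
    ext u : 1
    simp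
  rw [liftLast_apply, map_freeLift hsubst, hcomp, ← map_freeLift hC_last]
  have hCa : C a = C.curryRight (Fin.init a) (a (Fin.last k)) := by
    rw [MultilinearMap.curryRight_apply, Fin.snoc_init_self]
  rw [hCa, eq_comm, ← sub_eq_zero, ← map_sub, hC_tor (hπ _)]

lemma liftLast_sesq {U : Submodule F A} {π : A →ₗ[F] ℕ →₀ U}
    (hπ : ∀ a, π (L.D a) = Finsupp.mapDomain (· + 1) (π a)) {C : PolyMap F A M (k + 1) k}
    (hC : IsPolyBracket L D C) (a : Fin (k + 1) → A) (i : Fin (k + 1)) (x : A) :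
    liftLast π C (Function.update a i (L.D x)) =
      -mulVar F i (liftLast π C (Function.update a i x)) := by
  refine Fin.lastCases ?_ (fun i => ?_) i
  · simp [liftLast_apply, hπ, freeLift_mapDomain_succ]
  · have hcomm (v : Poly (Fin (k + 1)) M) : (-mulVar F i.castSucc) ((-mulVar F (Fin.last k)) v) =
        (-mulVar F (Fin.last k)) ((-mulVar F i.castSucc) v) := by
      simp [mulVar_mulVar i.castSucc]
    rw [← LinearMap.neg_apply, liftLast_apply, liftLast_apply, map_freeLift hcomm]
    simp only [Fin.init_update_castSucc, Function.update_of_ne (Fin.castSucc_ne_last i).symm]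
    congr 2
    ext u : 1
    simp [Fin.snoc_update, hC.sesq, rename_mulVar (Fin.castSucc_injective k)]

/-- The skew-symmetrization of a map. -/
noncomputable def PolyMap.antisymmetrize (γ : PolyMap F A M k k) : PolyMap F A M k k :=
  ((k.factorial : F)⁻¹) • ∑ σ : Equiv.Perm (Fin k), Equiv.Perm.sign σ •
    (rename F σ).compMultilinearMap (γ.domDomCongr σ)

lemma PolyMap.antisymmetrize_apply (γ : PolyMap F A M k k) (a : Fin k → A) :
    γ.antisymmetrize a = ((k.factorial : F)⁻¹) •
      ∑ σ : Equiv.Perm (Fin k), Equiv.Perm.sign σ • rename F σ (γ (a ∘ σ)) := by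
  simp only [antisymmetrize, smul_apply, sum_apply]
  rfl

lemma PolyMap.isBasicCochain_antisymmetrize {γ : PolyMap F A M k k}
    (hγ : ∀ a i x, γ (Function.update a i (L.D x)) = -mulVar F i (γ (Function.update a i x))) :
    IsBasicCochain L γ.antisymmetrize where
  sesq a i x := by
    have hperm (σ : Equiv.Perm (Fin k)) : rename F σ (γ (Function.update a i (L.D x) ∘ σ)) =
        -mulVar F i (rename F σ (γ (Function.update a i x ∘ σ))) := by
      rw [Function.update_comp_equiv, hγ, map_neg, rename_mulVar σ.injective,
        Equiv.apply_symm_apply, Function.update_comp_equiv]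
    simp only [antisymmetrize_apply, hperm, map_smul, map_sum, smul_neg, Finset.sum_neg_distrib,
      Units.smul_def, map_zsmul]
  skew a τ := by
    have hmul (σ : Equiv.Perm (Fin k)) :
        rename F τ (Equiv.Perm.sign σ • rename F σ (γ ((a ∘ τ) ∘ σ))) =
          Equiv.Perm.sign τ • Equiv.Perm.sign (τ * σ) •
            rename F (τ * σ : Equiv.Perm (Fin k)) (γ (a ∘ (τ * σ : Equiv.Perm (Fin k)))) := by
      rw [smul_smul, Equiv.Perm.sign_mul, ← mul_assoc, Int.units_mul_self, one_mul,
        Units.smul_def, map_zsmul, rename_rename σ.injective τ.injective]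
      rfl
    simp only [antisymmetrize_apply, map_smul, map_sum, hmul]
    rw [← Finset.smul_sum, smul_comm]
    congr 2
    exact Equiv.sum_comp (Equiv.mulLeft τ) fun σ => Equiv.Perm.sign σ • rename F σ (γ (a ∘ σ))

lemma IsPolyBracket.evalDagger_antisymmetrize {C : PolyMap F A M (k + 1) k}
    (hC : IsPolyBracket L D C) (hk : ((k + 1).factorial : F) ≠ 0)
    {γ : PolyMap F A M (k + 1) (k + 1)} (hγ : ∀ a, evalDagger D (γ a) = C a)
    (a : Fin (k + 1) → A) : evalDagger D (γ.antisymmetrize a) = C a := by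
  have hperm (σ : Equiv.Perm (Fin (k + 1))) :
      evalDagger D (Equiv.Perm.sign σ • rename F σ (γ (a ∘ σ))) = C a := by
    rw [Units.smul_def, map_zsmul, evalDagger_map_eq D (fun v => (totalD_rename_perm D σ v).symm),
      hγ, hC.skew, ← Units.smul_def, smul_smul, Int.units_mul_self, one_smul]
  rw [PolyMap.antisymmetrize_apply, map_smul, map_sum]
  simp only [hperm, Finset.sum_const, Finset.card_univ, Fintype.card_perm, Fintype.card_fin]
  rw [← Nat.cast_smul_eq_nsmul F, inv_smul_smul₀ hk]

theorem IsCBr.exists_psiRaw_eq {R : LCAMod F L M} (hL : Decomposes L)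
    (hk : ((k + 1).factorial : F) ≠ 0) {c : (Fin (k + 1) → A) → (Fin k → ℕ) → M}
    (hc : IsCBr R k c) (htor : VanishOnTorsion L c) :
    ∃ γ, IsGamma R (k + 1) γ ∧ psiRaw R γ = c := by
  obtain ⟨C, hC, rfl⟩ := hc.exists_eq_coe
  obtain ⟨U, π, hπ, hπ_tor⟩ := hL.exists_freePart
  have hCtor (a : Fin (k + 1) → A) (ha : IsTor L (a (Fin.last k))) : C a = 0 :=
    Finsupp.ext fun ν => htor a ν ⟨_, ha⟩
  refine ⟨_, (isGamma_coe_iff R).2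
    (PolyMap.isBasicCochain_antisymmetrize (liftLast_sesq hπ hC)), ?_⟩
  rw [psiRaw_coe]
  ext a : 1
  rw [hC.evalDagger_antisymmetrize hk (evalDagger_liftLast hπ_tor hC hCtor)]

end Brackets

theorem psi_morphism_of_complexes_and_iso_general {F : Type*} [Field F] {A M : Type*}
    [AddCommGroup A] [Module F A] [AddCommGroup M] [Module F M] (L : LCA F A) (R : LCAMod F L M) :
    (∀ m : M, psiRaw R (deltaRaw L R (fun (_ : Fin 0 → A) (_ : Fin 0 → ℕ) => m)) = dZero R m) ∧
    (∀ (k₀ : ℕ) (γ : (Fin (k₀ + 1) → A) → (Fin (k₀ + 1) → ℕ) → M), IsGamma R (k₀ + 1) γ →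
      psiRaw R (deltaRaw L R γ) = dRaw L R (psiRaw R γ)) ∧
    (∀ (k₀ : ℕ) (γ θ : (Fin (k₀ + 1) → A) → (Fin (k₀ + 1) → ℕ) → M),
      IsGamma R (k₀ + 1) γ → IsGamma R (k₀ + 1) θ → psiRaw R γ = psiRaw R θ →
        ∃ η, IsGamma R (k₀ + 1) η ∧ γ - θ = GammaD R η) ∧
    (Decomposes L →
      ∀ (k₀ : ℕ) (c : (Fin (k₀ + 1) → A) → (Fin k₀ → ℕ) → M), ((k₀ + 1).factorial : F) ≠ 0 →
        IsCBr R k₀ c → VanishOnTorsion L c →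
          ∃ γ, IsGamma R (k₀ + 1) γ ∧ psiRaw R γ = c) := by
  refine ⟨psiRaw_deltaRaw_const R, fun k₀ γ hγ => ?_, fun k₀ γ θ hγ hθ h =>
    hγ.exists_sub_eq_GammaD hθ h, fun hL k₀ c hk hc htor => hc.exists_psiRaw_eq hL hk htor⟩
  obtain ⟨γ', -, rfl⟩ := hγ.exists_eq_coe
  exact psiRaw_deltaRaw_coe R γ'

end LCC

open LCC in
/-- The identity map on `M/∂^M M` together with the maps induced by
`ψ^k` (`k ≥ 1`) define an embedding of cohomology complexes `Γ^•(A,M) ↪ C̄^•(A,M)`: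
the diagrams `ψ^1 ∘ δ = d` on `M/∂^M M` and `ψ^{k+1} ∘ δ = d ∘ ψ^k` on `Γ^k` commute
(injectivity being the content of `Ker ψ^k = ∂Γ̃^k`, also recorded below).  If,
moreover, `A` decomposes as an `F[∂]`-module into the direct sum of its torsion and
a free submodule, this embedding is an isomorphism of complexes `Γ^• ≅ C̄^•`. -/
theorem psi_morphism_of_complexes_and_iso
    {F : Type*} [Field F] [CharZero F]
    {A M : Type*} [AddCommGroup A] [Module F A] [AddCommGroup M] [Module F M]
    (L : LCA F A) (R : LCAMod F L M) :
    -- ψ^1 ∘ δ = d on C⁰ = Γ⁰ = M/∂^M M (on representatives)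
    (∀ m : M, psiRaw R (deltaRaw L R (fun (_ : Fin 0 → A) (_ : Fin 0 → ℕ) => m))
        = dZero R m) ∧
    -- ψ^{k+1} ∘ δ = d ∘ ψ^k on basic cochains (hence on Γ^k)
    (∀ (k₀ : ℕ) (γ : (Fin (k₀+1) → A) → (Fin (k₀+1) → ℕ) → M), IsGamma R (k₀+1) γ →
      psiRaw R (deltaRaw L R γ) = dRaw L R (psiRaw R γ)) ∧
    -- the induced maps on Γ^k are injective into C̄^k:
    (∀ (k₀ : ℕ) (γ θ : (Fin (k₀+1) → A) → (Fin (k₀+1) → ℕ) → M),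
      IsGamma R (k₀+1) γ → IsGamma R (k₀+1) θ → psiRaw R γ = psiRaw R θ →
        ∃ η, IsGamma R (k₀+1) η ∧ γ - θ = GammaD R η) ∧
    -- isomorphism under the decomposition hypothesis (surjectivity onto C̄^k):
    (Decomposes L →
      ∀ (k₀ : ℕ) (c : (Fin (k₀+1) → A) → (Fin k₀ → ℕ) → M),
        IsCBr R k₀ c → VanishOnTorsion L c →
          ∃ γ, IsGamma R (k₀+1) γ ∧ psiRaw R γ = c) := by
  obtain ⟨h_zero, h_comm, h_inj, h_surj⟩ := psi_morphism_of_complexes_and_iso_general L R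
  exact ⟨h_zero, h_comm, h_inj, fun hL k₀ c =>
    h_surj hL k₀ c (Nat.cast_ne_zero.2 (k₀ + 1).factorial_ne_zero)⟩
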